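/- arXiv:1704.08555 — 2 statements merged into one kernel-verified Lean document; each statement's English description precedes it below -/
import Mathlib

section
/- Let n ≥ 2, j ∈ ℕ₀ and u ∈ 𝒮(ℝ^{n−1}) with u ≠ 0. Then there exists a sequence (u_k)_{k∈ℕ} in 𝒮(ℝⁿ) such that ((−i∂_{x_n})^j u_k)(x′,0) = u(x′) for every k and every x′ ∈ ℝ^{n−1}, while: for every p ∈ (0,∞) and q ∈ (1,∞], ‖u_k‖_{B^{1/p+j}_{p,q}(ℝⁿ)} → 0 as k → ∞; and for every p ∈ (1,∞) and q ∈ (0,∞], ‖u_k‖_{F^{1/p+j}_{p,q}(ℝⁿ)} → 0 as k → ∞. -/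
/-!
The sequence is an average of building blocks concentrated on ever finer scales in the normal
variable.  Choose a Schwartz function `F` on `ℝ` supported in `[7/10, 1]` whose inverse Fourier
transform `η = ℱ⁻¹F` has `(-i∂)^j η(0) = 1` (`exists_profile`).  For every `l`, the block
`2^{-lj} u(x') η(2^l x_n)` has `j`-th trace `u`, and hence so has the average `U_k` over
`k < l ≤ 2k + 1` (`Useq`, `traceJ_Useq`).

In frequency the `l`-th block is essentially localised in the `l`-th annulus.  Its `i`-th
Littlewood–Paley piece vanishes for `i < l` (`Gil_eq_zero`).  For `i > l` it only sees tangential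
frequencies `|ξ'| ≳ 2^i`, where `ℱu` is rapidly decreasing, and is therefore
`O(2^{-M(i-l)})` for every `M` (`SFi_Gil_le`).  This gives the pointwise bound `piece_bound`,
  `2^{(s+j)i} |(U_k)_i(x)| ≤ C A_{k,i} · 2^{si} (1 + |(x', 2^i x_n)|)^{-K}`,
where `A_{k,i} ≲ 1/(k+1)` and `∑_i A_{k,i} ≲ 1`; consequently `∑_i A_{k,i}^r → 0` as `k → ∞`
for every `r > 1` (`tendsto_tsum_Ak`).

For `s = 1/p` the profiles `2^{i/p} (1 + |(x', 2^i x_n)|)^{-K}` have the same `L_p` norm for all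
`i`.  The Besov norm of `U_k` is thus at most a multiple of the `ℓ_q` norm of `A_{k,·}`, which
tends to zero when `q > 1` (`besov_tendsto`).

For the Triebel–Lizorkin norm, the profiles live on essentially disjoint slabs
`|x_n| ∼ 2^{-i}`.  With the weight `Hw(t) = 1 + |t|^{1/2} + |t|^{-1/2}`, the powers
`Hw(2^i x_n)^{-β}`, `β > 0`, are summable over `i` uniformly in `x_n ≠ 0` (`exists_Gam`), so the
inner `ℓ_q` norm is controlled, for every `q > 0`, by the `ℓ_p` norm with weight `Hw(2^i x_n)`
(`exists_ellq_le`).  The weight is integrable against the profiles, so after integration only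
`∑_i A_{k,i}^p` remains, and this tends to zero for `p > 1` (`tl_tendsto`).
-/

open MeasureTheory Filter Complex
open scoped ENNReal NNReal Real BigOperators Topology

noncomputable section

/-- `ℝ^m`, with its (sup-normed) product structure; the Lebesgue measure is the
product measure. -/
abbrev Eu (m : ℕ) : Type := Fin m → ℝ

/-- Tempered distributions on `ℝ^m`. -/
abbrev TD (m : ℕ) := SchwartzMap (Eu m) ℂ →L[ℂ] ℂ

/-- The dot product `x · ξ = ∑ xᵢ ξᵢ`. -/
def dotp {m : ℕ} (x ξ : Eu m) : ℝ := ∑ i, x i * ξ i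

/-- The euclidean norm `|x|`. -/
def eun {m : ℕ} (x : Eu m) : ℝ := Real.sqrt (∑ i, x i ^ 2)

/-- The japanese bracket `⟨ξ⟩ = (1 + |ξ|²)^(1/2)`. -/
def jap {m : ℕ} (ξ : Eu m) : ℝ := Real.sqrt (1 + ∑ i, ξ i ^ 2)

/-- The Fourier transform `ℱf(ξ) = ∫ e^{-i x·ξ} f(x) dx` (paper convention). -/
def pF {m : ℕ} (f : Eu m → ℂ) (ξ : Eu m) : ℂ :=
  ∫ x : Eu m, Complex.exp (-(Complex.I * (dotp x ξ : ℂ))) * f x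

/-- The inverse Fourier transform `(2π)^{-m} ∫ e^{i x·ξ} f(ξ) dξ`. -/
def pFinv {m : ℕ} (f : Eu m → ℂ) (x : Eu m) : ℂ :=
  (((2 * Real.pi) ^ m : ℝ)⁻¹) • ∫ ξ : Eu m, Complex.exp (Complex.I * (dotp x ξ : ℂ)) * f ξ

/-- One-dimensional Fourier transform. -/
def pF1 (f : ℝ → ℂ) (τ : ℝ) : ℂ :=
  ∫ t : ℝ, Complex.exp (-(Complex.I * ((t * τ : ℝ) : ℂ))) * f t

/-- One-dimensional inverse Fourier transform. -/
def pFinv1 (f : ℝ → ℂ) (t : ℝ) : ℂ :=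
  ((2 * Real.pi)⁻¹ : ℝ) • ∫ τ : ℝ, Complex.exp (Complex.I * ((t * τ : ℝ) : ℂ)) * f τ

/-- `ℓ_q`-norm (`0 < q ≤ ∞`) of a sequence of extended nonnegative reals. -/
def ellqNorm (q : ℝ≥0∞) (b : ℕ → ℝ≥0∞) : ℝ≥0∞ :=
  if q = ∞ then ⨆ j, b j else (∑' j, b j ^ q.toReal) ^ (1 / q.toReal)

/-- The weight `2^{s j}` as an extended nonnegative real. -/
def tw (s : ℝ) (j : ℕ) : ℝ≥0∞ := ENNReal.ofReal ((2 : ℝ) ^ (s * (j : ℝ)))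

/-- `1/p ∈ ℝ` for `p ∈ (0,∞]`. -/
def iv (p : ℝ≥0∞) : ℝ := p⁻¹.toReal

/-- An admissible Littlewood–Paley generating function `Ψ`. -/
def GoodPsi (Ψ : ℝ → ℝ) : Prop :=
  ContDiff ℝ (⊤ : ℕ∞) Ψ ∧ (∀ t : ℝ, t ≤ 11 / 10 → Ψ t = 1) ∧ (∀ t : ℝ, 13 / 10 ≤ t → Ψ t = 0)

/-- The `j`-th Littlewood–Paley symbol `Φ_j(ξ) = Ψ(2^{-j}|ξ|) − Ψ(2^{1-j}|ξ|)` (with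
`Ψ_{-1} = 0`). -/
def LPsym (Ψ : ℝ → ℝ) {m : ℕ} (j : ℕ) (ξ : Eu m) : ℝ :=
  Ψ ((2 : ℝ) ^ (-(j : ℝ)) * eun ξ) - (if j = 0 then 0 else Ψ ((2 : ℝ) ^ (1 - (j : ℝ)) * eun ξ))

/-- `Φs` is the Littlewood–Paley partition of unity built from `Ψ`, realised as a family
of Schwartz functions. -/
def IsLP (Ψ : ℝ → ℝ) {m : ℕ} (Φs : ℕ → SchwartzMap (Eu m) ℂ) : Prop :=
  ∀ j ξ, Φs j ξ = (LPsym Ψ j ξ : ℂ)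

/-- The tempered distribution `T` is represented by the function `g`. -/
def Represents {m : ℕ} (T : TD m) (g : Eu m → ℂ) : Prop :=
  ∀ φ : SchwartzMap (Eu m) ℂ, T φ = ∫ x, g x * φ x

/-- `g` is (the continuous function representing) the Littlewood–Paley piece
`ℱ^{-1}(Φ_j ℱu)` of the tempered distribution `u`:  for every Schwartz `φ`, writing
`ψ = ℱ^{-1}φ` and `χ = ℱ(Φ_j ψ)` (as Schwartz functions), one has `⟨u, χ⟩ = ∫ g φ`. -/
def IsLPpiece {m : ℕ} (Φj : SchwartzMap (Eu m) ℂ) (u : TD m) (g : Eu m → ℂ) : Prop :=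
  Continuous g ∧
    ∀ φ ψ χ : SchwartzMap (Eu m) ℂ,
      (∀ x, ψ x = pFinv (fun y => φ y) x) →
      (∀ ξ, χ ξ = pF (fun η => Φj η * ψ η) ξ) →
      u χ = ∫ x, g x * φ x

open Classical in
/-- The Littlewood–Paley piece `ℱ^{-1}(Φ_j ℱu)` of a tempered distribution, as a
function (via choice of the continuous representative). -/
def LPfun {m : ℕ} (Φj : SchwartzMap (Eu m) ℂ) (u : TD m) : Eu m → ℂ :=
  if h : ∃ g, IsLPpiece Φj u g then h.choose else 0

/-- Besov quasi-norm of a sequence of (Littlewood–Paley) functions. -/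
def besovNormSeq {m : ℕ} (s : ℝ) (p q : ℝ≥0∞) (g : ℕ → Eu m → ℂ) : ℝ≥0∞ :=
  ellqNorm q fun j => tw s j * eLpNorm (g j) p volume

/-- Triebel–Lizorkin quasi-norm of a sequence of (Littlewood–Paley) functions. -/
def tlNormSeq {m : ℕ} (s : ℝ) (p q : ℝ≥0∞) (g : ℕ → Eu m → ℂ) : ℝ≥0∞ :=
  (∫⁻ x, (ellqNorm q fun j => tw s j * (‖g j x‖₊ : ℝ≥0∞)) ^ p.toReal ∂volume) ^ (1 / p.toReal)

/-- Besov quasi-norm `‖u‖_{B^s_{p,q}}` of a tempered distribution. -/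
def besovNormD {m : ℕ} (Φs : ℕ → SchwartzMap (Eu m) ℂ) (s : ℝ) (p q : ℝ≥0∞) (u : TD m) :
    ℝ≥0∞ :=
  besovNormSeq s p q fun j => LPfun (Φs j) u

/-- Triebel–Lizorkin quasi-norm `‖u‖_{F^s_{p,q}}` of a tempered distribution. -/
def tlNormD {m : ℕ} (Φs : ℕ → SchwartzMap (Eu m) ℂ) (s : ℝ) (p q : ℝ≥0∞) (u : TD m) :
    ℝ≥0∞ :=
  tlNormSeq s p q fun j => LPfun (Φs j) u

/-- The open upper half-space `ℝ^{m+1}_+ = {x : x_n > 0}`. -/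
def upperH (m : ℕ) : Set (Eu (m + 1)) := {x | 0 < x (Fin.last m)}

/-- `w ∈ 𝒮'(ℝ^{m+1})` agrees with the function `f` on the open half-space `ℝ^{m+1}_+`. -/
def RestrictsTo {m : ℕ} (w : TD (m + 1)) (f : Eu (m + 1) → ℂ) : Prop :=
  ∀ φ : SchwartzMap (Eu (m + 1)) ℂ, HasCompactSupport (φ : Eu (m + 1) → ℂ) →
    tsupport (φ : Eu (m + 1) → ℂ) ⊆ upperH m → w φ = ∫ x, f x * φ x

/-- Two tempered distributions agree on the open upper half-space. -/
def AgreeOnUpper {m : ℕ} (w v : TD (m + 1)) : Prop :=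
  ∀ φ : SchwartzMap (Eu (m + 1)) ℂ, HasCompactSupport (φ : Eu (m + 1) → ℂ) →
    tsupport (φ : Eu (m + 1) → ℂ) ⊆ upperH m → w φ = v φ

/-- `‖f‖_{B^s_{p,q}(ℝ̄^{m+1}_+)}`: infimum of the Besov norms of all distributional
extensions of (the restriction to the half-space of) the function `f`. -/
def bHalfNormF {m : ℕ} (Φs : ℕ → SchwartzMap (Eu (m + 1)) ℂ) (s : ℝ) (p q : ℝ≥0∞)
    (f : Eu (m + 1) → ℂ) : ℝ≥0∞ :=
  ⨅ (w : TD (m + 1)) (_ : RestrictsTo w f), besovNormD Φs s p q w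

/-- `‖f‖_{F^s_{p,q}(ℝ̄^{m+1}_+)}`. -/
def tlHalfNormF {m : ℕ} (Φs : ℕ → SchwartzMap (Eu (m + 1)) ℂ) (s : ℝ) (p q : ℝ≥0∞)
    (f : Eu (m + 1) → ℂ) : ℝ≥0∞ :=
  ⨅ (w : TD (m + 1)) (_ : RestrictsTo w f), tlNormD Φs s p q w

/-- `‖v‖_{B^s_{p,q}(ℝ̄^{m+1}_+)}` for a tempered distribution `v`. -/
def bHalfNormD {m : ℕ} (Φs : ℕ → SchwartzMap (Eu (m + 1)) ℂ) (s : ℝ) (p q : ℝ≥0∞)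
    (v : TD (m + 1)) : ℝ≥0∞ :=
  ⨅ (w : TD (m + 1)) (_ : AgreeOnUpper w v), besovNormD Φs s p q w

/-- `‖v‖_{F^s_{p,q}(ℝ̄^{m+1}_+)}` for a tempered distribution `v`. -/
def tlHalfNormD {m : ℕ} (Φs : ℕ → SchwartzMap (Eu (m + 1)) ℂ) (s : ℝ) (p q : ℝ≥0∞)
    (v : TD (m + 1)) : ℝ≥0∞ :=
  ⨅ (w : TD (m + 1)) (_ : AgreeOnUpper w v), tlNormD Φs s p q w

/-- Partial derivative in the `i`-th coordinate. -/
def cDeriv {k : ℕ} (i : Fin k) (f : Eu k → ℂ) : Eu k → ℂ :=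
  fun x => deriv (fun t => f (Function.update x i t)) (x i)

/-- Iterated partial derivative `∂^α` for a multi-index `α`. -/
def mDeriv {k : ℕ} (α : Fin k → ℕ) (f : Eu k → ℂ) : Eu k → ℂ :=
  (List.finRange k).foldr (fun i g => (cDeriv i)^[α i] g) f

/-- Length `|α| = ∑ αᵢ` of a multi-index. -/
def degS {k : ℕ} (α : Fin k → ℕ) : ℕ := ∑ i, α i

/-- `D^α = (-i)^{|α|} ∂^α`. -/
def mD {k : ℕ} (α : Fin k → ℕ) (f : Eu k → ℂ) : Eu k → ℂ :=
  fun x => (-Complex.I) ^ degS α * mDeriv α f x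

/-- Monomial `x^α`. -/
def monom {k : ℕ} (α : Fin k → ℕ) (x : Eu k) : ℂ := ∏ i, (x i : ℂ) ^ α i

/-- `D^β_x D^α_ξ a(x, ξ)` for a symbol `a`. -/
def symD {k : ℕ} (α β : Fin k → ℕ) (a : Eu k → Eu k → ℂ) (x ξ : Eu k) : ℂ :=
  mD β (fun y => mD α (a y) ξ) x

/-- The Hörmander class `S^d_{1,0}(ℝ^k × ℝ^k)` of uniformly estimated symbols. -/
def IsSymbol {k : ℕ} (d : ℝ) (a : Eu k → Eu k → ℂ) : Prop :=
  ContDiff ℝ (⊤ : ℕ∞) (fun z : Eu k × Eu k => a z.1 z.2) ∧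
    ∀ α β : Fin k → ℕ, ∃ C : ℝ, ∀ x ξ, ‖symD α β a x ξ‖ ≤ C * jap ξ ^ (d - (degS α : ℝ))

/-- `k` is the inverse Fourier transform in `ξ_n` of `ξ_n ↦ D^α_ξ D^β_x a(x',0,ξ',ξ_n)`
away from `z_n = 0`, smooth there. -/
def TCkernel {m : ℕ} (a : Eu (m + 1) → Eu (m + 1) → ℂ) (α β : Fin (m + 1) → ℕ)
    (k : Eu m → ℝ → Eu m → ℂ) : Prop :=
  (∀ x' ξ', ContDiffOn ℝ (⊤ : ℕ∞) (fun t => k x' t ξ') {t : ℝ | t ≠ 0}) ∧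
    ∀ (x' ξ' : Eu m) (φ : ℝ → ℂ), ContDiff ℝ (⊤ : ℕ∞) φ → HasCompactSupport φ →
      tsupport φ ⊆ {t : ℝ | t ≠ 0} →
      (∫ τ : ℝ, symD α β a (Fin.snoc x' 0) (Fin.snoc ξ' τ) * pFinv1 φ τ) =
        ∫ t : ℝ, k x' t ξ' * φ t

/-- The uniform two-sided transmission condition at `x_n = 0`. -/
def HasUTTC {m : ℕ} (a : Eu (m + 1) → Eu (m + 1) → ℂ) : Prop :=
  ∀ α β : Fin (m + 1) → ℕ, ∃ k : Eu m → ℝ → Eu m → ℂ, TCkernel a α β k ∧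
    ∀ (l mm : ℕ) (ξ' : Eu m), ∃ C : ℝ, ∀ (x' : Eu m) (t : ℝ), t ≠ 0 →
      ‖(t : ℂ) ^ l * iteratedDeriv mm (fun u => k x' u ξ') t‖ ≤ C

/-- `t^l D^m_t D^{α'}_{ξ'} D^{β'}_{x'} k̃(x', t, ξ')`, the `t`-derivatives being taken
within `[0,∞)`. -/
def pkDeriv {m : ℕ} (α' β' : Fin m → ℕ) (l mm : ℕ) (k : Eu m → ℝ → Eu m → ℂ)
    (x' : Eu m) (t : ℝ) (ξ' : Eu m) : ℂ :=
  (t : ℂ) ^ l *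
    iteratedDerivWithin mm
      (fun u => mDeriv β' (fun y => mDeriv α' (fun η => k y u η) ξ') x') (Set.Ici 0) t

/-- The seminorm `sup ⟨ξ'⟩^{-(μ+1-|α'|-l+m)} |t^l D^m_t D^{α'}_{ξ'} D^{β'}_{x'} k̃|` of a
Poisson/trace symbol-kernel. -/
def pkSemiE {m : ℕ} (μ : ℝ) (α' β' : Fin m → ℕ) (l mm : ℕ) (k : Eu m → ℝ → Eu m → ℂ) :
    ℝ≥0∞ :=
  ⨆ (x' : Eu m) (ξ' : Eu m) (t : Set.Ici (0 : ℝ)),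
    ENNReal.ofReal
      (jap ξ' ^ (-(μ + 1 - (degS α' : ℝ) - (l : ℝ) + (mm : ℝ))) *
        ‖pkDeriv α' β' l mm k x' t ξ'‖)

/-- Membership in the symbol-kernel class `S^μ_{1,0}(ℝ^m × ℝ^m, 𝒮(ℝ̄₊))`. -/
def InPK {m : ℕ} (μ : ℝ) (k : Eu m → ℝ → Eu m → ℂ) : Prop :=
  ContDiffOn ℝ (⊤ : ℕ∞) (fun z : (Eu m × ℝ) × Eu m => k z.1.1 z.1.2 z.2) {z | 0 ≤ z.1.2} ∧
    ∀ (α' β' : Fin m → ℕ) (l mm : ℕ), pkSemiE μ α' β' l mm k ≠ ∞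

/-- `‖k̃‖_{(N)}`: maximum of the symbol-kernel seminorms over all indices `≤ N`. -/
def pkNormN {m : ℕ} (μ : ℝ) (N : ℕ) (k : Eu m → ℝ → Eu m → ℂ) : ℝ≥0∞ :=
  ⨆ (α' : Fin m → ℕ) (_ : degS α' ≤ N) (β' : Fin m → ℕ) (_ : degS β' ≤ N)
    (l : ℕ) (_ : l ≤ N) (mm : ℕ) (_ : mm ≤ N), pkSemiE μ α' β' l mm k

/-- `x_n^l D^m_{x_n} y_n^{l'} D^{m'}_{y_n} D^{α'}_{ξ'} D^{β'}_{x'} g̃`, the normal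
derivatives being taken within `[0,∞)`. -/
def sgDeriv {m : ℕ} (α' β' : Fin m → ℕ) (l mm l' mm' : ℕ)
    (g : Eu m → ℝ → ℝ → Eu m → ℂ) (x' : Eu m) (s t : ℝ) (ξ' : Eu m) : ℂ :=
  (s : ℂ) ^ l * (t : ℂ) ^ l' *
    iteratedDerivWithin mm
      (fun u =>
        iteratedDerivWithin mm'
          (fun v => mDeriv β' (fun y => mDeriv α' (fun η => g y u v η) ξ') x')
          (Set.Ici 0) t)
      (Set.Ici 0) s

/-- Singular Green symbol-kernel seminorm. -/
def sgSemiE {m : ℕ} (d : ℝ) (α' β' : Fin m → ℕ) (l mm l' mm' : ℕ)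
    (g : Eu m → ℝ → ℝ → Eu m → ℂ) : ℝ≥0∞ :=
  ⨆ (x' : Eu m) (ξ' : Eu m) (s : Set.Ici (0 : ℝ)) (t : Set.Ici (0 : ℝ)),
    ENNReal.ofReal
      (jap ξ' ^
          (-(d + 1 - (degS α' : ℝ) - (l : ℝ) + (mm : ℝ) - (l' : ℝ) + (mm' : ℝ))) *
        ‖sgDeriv α' β' l mm l' mm' g x' s t ξ'‖)

/-- Membership in the singular Green symbol-kernel class
`S^{d-1}_{1,0}(ℝ^m × ℝ^m, 𝒮(ℝ̄²₊₊))` (for operators of order `d`). -/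
def InSG {m : ℕ} (d : ℝ) (g : Eu m → ℝ → ℝ → Eu m → ℂ) : Prop :=
  ContDiffOn ℝ (⊤ : ℕ∞) (fun z : ((Eu m × ℝ) × ℝ) × Eu m => g z.1.1.1 z.1.1.2 z.1.2 z.2)
      {z | 0 ≤ z.1.1.2 ∧ 0 ≤ z.1.2} ∧
    ∀ (α' β' : Fin m → ℕ) (l mm l' mm' : ℕ), sgSemiE d α' β' l mm l' mm' g ≠ ∞

/-- `‖g̃‖_{(N)}`. -/
def sgNormN {m : ℕ} (d : ℝ) (N : ℕ) (g : Eu m → ℝ → ℝ → Eu m → ℂ) : ℝ≥0∞ :=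
  ⨆ (α' : Fin m → ℕ) (_ : degS α' ≤ N) (β' : Fin m → ℕ) (_ : degS β' ≤ N)
    (l : ℕ) (_ : l ≤ N) (mm : ℕ) (_ : mm ≤ N) (l' : ℕ) (_ : l' ≤ N) (mm' : ℕ)
    (_ : mm' ≤ N), sgSemiE d α' β' l mm l' mm' g

/-- The Poisson operator `OPK(k̃)v(x', x_n) = (2π)^{1-n} ∫ e^{i x'·ξ'} k̃(x',x_n,ξ') ℱv(ξ') dξ'`. -/
def OPK {m : ℕ} (k : Eu m → ℝ → Eu m → ℂ) (v : Eu m → ℂ) : Eu (m + 1) → ℂ :=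
  fun x =>
    (((2 * Real.pi) ^ m : ℝ)⁻¹) •
      ∫ ξ' : Eu m,
        Complex.exp (Complex.I * (dotp (Fin.init x) ξ' : ℂ)) *
          (k (Fin.init x) (x (Fin.last m)) ξ' * pF v ξ')

/-- The partial Fourier transform `ú(ξ', y_n)` of `u(y', y_n)` in `y'`. -/
def hatu {m : ℕ} (u : Eu (m + 1) → ℂ) (ξ' : Eu m) (t : ℝ) : ℂ :=
  ∫ y' : Eu m, Complex.exp (-(Complex.I * (dotp y' ξ' : ℂ))) * u (Fin.snoc y' t)

/-- The class-0 trace operator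
`OPT(t̃)u(x') = (2π)^{1-n} ∫∫ e^{i x'·ξ'} t̃(x',y_n,ξ') ú(ξ',y_n) dy_n dξ'`. -/
def OPT {m : ℕ} (tk : Eu m → ℝ → Eu m → ℂ) (u : Eu (m + 1) → ℂ) : Eu m → ℂ :=
  fun x' =>
    (((2 * Real.pi) ^ m : ℝ)⁻¹) •
      ∫ ξ' : Eu m, ∫ t in Set.Ioi (0 : ℝ),
        Complex.exp (Complex.I * (dotp x' ξ' : ℂ)) * (tk x' t ξ' * hatu u ξ' t)

/-- The class-0 singular Green operator
`OPG(g̃)u(x',x_n) = (2π)^{1-n} ∫∫ e^{i x'·ξ'} g̃(x',x_n,y_n,ξ') ú(ξ',y_n) dy_n dξ'`. -/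
def OPG {m : ℕ} (g : Eu m → ℝ → ℝ → Eu m → ℂ) (u : Eu (m + 1) → ℂ) : Eu (m + 1) → ℂ :=
  fun x =>
    (((2 * Real.pi) ^ m : ℝ)⁻¹) •
      ∫ ξ' : Eu m, ∫ t in Set.Ioi (0 : ℝ),
        Complex.exp (Complex.I * (dotp (Fin.init x) ξ' : ℂ)) *
          (g (Fin.init x) (x (Fin.last m)) t ξ' * hatu u ξ' t)

/-- Half-space multi-index derivative: the `x_n`-derivatives are taken within `[0,∞)`,
the tangential ones in the full space. -/
def hDeriv {m : ℕ} (β : Fin (m + 1) → ℕ) (f : Eu (m + 1) → ℂ) (x : Eu (m + 1)) : ℂ :=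
  iteratedDerivWithin (β (Fin.last m))
    (fun t =>
      mDeriv (fun i : Fin m => β i.castSucc) (fun y : Eu m => f (Fin.snoc y t))
        (Fin.init x))
    (Set.Ici 0) (x (Fin.last m))

/-- The Schwartz seminorm `‖u‖_{𝒮,N} = max_{|γ|,|δ| ≤ N} sup |y^γ D^δ u|`. -/
def swSemi {k : ℕ} (N : ℕ) (u : Eu k → ℂ) : ℝ≥0∞ :=
  ⨆ (γ : Fin k → ℕ) (_ : degS γ ≤ N) (δ : Fin k → ℕ) (_ : degS δ ≤ N) (y : Eu k),
    ENNReal.ofReal ‖monom γ y * mDeriv δ u y‖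

/-- `supp ℱf ⊆ S` for a (polynomially bounded, continuous) function `f`:  the pairing
`⟨ℱf, φ⟩ = ∫ f ℱφ` vanishes for every Schwartz `φ` with support disjoint from `S`. -/
def FsuppIn {m : ℕ} (f : Eu m → ℂ) (S : Set (Eu m)) : Prop :=
  ∀ φ : SchwartzMap (Eu m) ℂ, Disjoint (tsupport (φ : Eu m → ℂ)) S →
    (∫ x, f x * pF (fun y => φ y) x) = 0

/-- The one-sided trace `γ_j v (x') = ((-i ∂_{x_n})^j v)(x', 0)`. -/
def traceJ {m : ℕ} (j : ℕ) (v : Eu (m + 1) → ℂ) (x' : Eu m) : ℂ :=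
  (-Complex.I) ^ j * iteratedDeriv j (fun t => v (Fin.snoc x' t)) 0


section construction
open scoped FourierTransform SchwartzMap

/-! ### Fourier transform on Schwartz functions and Littlewood–Paley pieces -/

/-- The identity `EuclideanSpace ℝ (Fin n) → Eu n` as a continuous linear equivalence. -/
def eucEquiv (n : ℕ) : EuclideanSpace ℝ (Fin n) ≃L[ℝ] Eu n := EuclideanSpace.equiv (Fin n) ℝ

/-- The map `ξ ↦ ξ / (2π)`, which relates `e^{-i x·ξ}` to the kernel `e^{-2πi x·ξ}` of Mathlib's
Fourier transform. -/
def scaleEquiv (n : ℕ) : Eu n ≃L[ℝ] EuclideanSpace ℝ (Fin n) :=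
  (ContinuousLinearEquiv.smulLeft (Units.mk0 ((2 * π)⁻¹ : ℝ) (by positivity))).trans
    (eucEquiv n).symm

lemma scaleEquiv_apply {n : ℕ} (ξ : Eu n) (i : Fin n) :
    scaleEquiv n ξ i = (2 * π)⁻¹ * ξ i := rfl

/-- The Fourier transform `pF` on Schwartz functions, obtained from Mathlib's transform on
`EuclideanSpace` by conjugation and rescaling. -/
def SF (n : ℕ) : 𝓢(Eu n, ℂ) →L[ℂ] 𝓢(Eu n, ℂ) :=
  (SchwartzMap.compCLMOfContinuousLinearEquiv ℂ (scaleEquiv n)) ∘L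
    (SchwartzMap.fourierTransformCLM ℂ) ∘L
      (SchwartzMap.compCLMOfContinuousLinearEquiv ℂ (eucEquiv n))

/-- The inverse Fourier transform `pFinv` on Schwartz functions. -/
def SFi (n : ℕ) : 𝓢(Eu n, ℂ) →L[ℂ] 𝓢(Eu n, ℂ) :=
  (SchwartzMap.compCLMOfContinuousLinearEquiv ℂ (eucEquiv n).symm) ∘L
    (SchwartzMap.compCLMOfContinuousLinearEquiv ℂ (LinearIsometryEquiv.neg ℝ
      (E := EuclideanSpace ℝ (Fin n)))) ∘L
    (SchwartzMap.fourierTransformCLM ℂ) ∘L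
      (SchwartzMap.compCLMOfContinuousLinearEquiv ℂ (scaleEquiv n).symm)

lemma SF_SFi {n : ℕ} (f : 𝓢(Eu n, ℂ)) : SF n (SFi n f) = f := by
  set h := SchwartzMap.compCLMOfContinuousLinearEquiv ℂ (scaleEquiv n).symm f with hh
  have e1 : SchwartzMap.compCLMOfContinuousLinearEquiv ℂ (eucEquiv n) (SFi n f) = 𝓕⁻ h := by
    ext x
    rfl
  have : SF n (SFi n f) = SchwartzMap.compCLMOfContinuousLinearEquiv ℂ (scaleEquiv n)
      (𝓕 (SchwartzMap.compCLMOfContinuousLinearEquiv ℂ (eucEquiv n) (SFi n f))) := rfl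
  rw [this, e1, FourierTransform.fourier_fourierInv_eq]
  ext x
  simp [hh]

lemma SFi_SF {n : ℕ} (f : 𝓢(Eu n, ℂ)) : SFi n (SF n f) = f := by
  set h := SchwartzMap.compCLMOfContinuousLinearEquiv ℂ (eucEquiv n) f with hh
  have e1 : SchwartzMap.compCLMOfContinuousLinearEquiv ℂ (scaleEquiv n).symm (SF n f) = 𝓕 h := by
    ext x
    simp [SF, hh]
  have : SFi n (SF n f) = SchwartzMap.compCLMOfContinuousLinearEquiv ℂ (eucEquiv n).symm
      (𝓕⁻ (SchwartzMap.compCLMOfContinuousLinearEquiv ℂ (scaleEquiv n).symm (SF n f))) := rfl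
  rw [this, e1, FourierTransform.fourierInv_fourier_eq]
  ext x
  simp [hh]

lemma integral_euc {n : ℕ} (g : Eu n → ℂ) :
    ∫ v : EuclideanSpace ℝ (Fin n), g (eucEquiv n v) = ∫ x, g x :=
  (EuclideanSpace.volume_preserving_symm_measurableEquiv_toLp (Fin n)).integral_comp
      (MeasurableEquiv.measurableEmbedding _) g

lemma SF_apply {n : ℕ} (f : 𝓢(Eu n, ℂ)) (ξ : Eu n) : SF n f ξ = pF (fun y => f y) ξ := by
  have : SF n f ξ = 𝓕 (fun v => f (eucEquiv n v)) (scaleEquiv n ξ) := rfl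
  rw [this, Real.fourier_eq', pF, ← integral_euc]
  refine integral_congr_ae (Eventually.of_forall fun v => ?_)
  simp only [smul_eq_mul]
  congr 2
  have : (inner ℝ v (scaleEquiv n ξ) : ℝ) = (2 * π)⁻¹ * dotp (eucEquiv n v) ξ := by
    simp only [PiLp.inner_apply, scaleEquiv_apply, dotp, Finset.mul_sum]
    refine Finset.sum_congr rfl fun i _ => ?_
    simp [eucEquiv]
    ring
  rw [this]
  have hp : (π : ℂ) ≠ 0 := by exact_mod_cast Real.pi_ne_zero
  push_cast
  field_simp

lemma SFi_apply {n : ℕ} (f : 𝓢(Eu n, ℂ)) (x : Eu n) : SFi n f x = pFinv (fun y => f y) x := by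
  have : SFi n f x = 𝓕⁻ (fun v => f ((scaleEquiv n).symm v)) ((eucEquiv n).symm x) := by
    rw [Real.fourierInv_eq_fourier_neg]; rfl
  have h2 : ∀ v : EuclideanSpace ℝ (Fin n), (scaleEquiv n).symm v = (2 * π) • eucEquiv n v := by
    intro v
    rw [ContinuousLinearEquiv.symm_apply_eq]
    ext i
    rw [scaleEquiv_apply]
    simp [eucEquiv]
    field_simp
  rw [this, Real.fourierInv_eq', pFinv]
  have h3 := Measure.integral_comp_smul (volume : Measure (Eu n))
    (fun ξ : Eu n => Complex.exp (Complex.I * (dotp x ξ : ℂ)) * f ξ) (2 * π)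
  rw [Module.finrank_fin_fun, abs_of_pos (by positivity)] at h3
  rw [← h3, ← integral_euc]
  refine integral_congr_ae (Eventually.of_forall fun v => ?_)
  simp only [smul_eq_mul, h2]
  congr 2
  have : (inner ℝ v ((eucEquiv n).symm x) : ℝ) = (2 * π)⁻¹ * dotp x ((2 * π) • eucEquiv n v) := by
    simp only [PiLp.inner_apply, dotp, Finset.mul_sum]
    refine Finset.sum_congr rfl fun i _ => ?_
    simp [eucEquiv]
    field_simp
  rw [this]
  have hp : (π : ℂ) ≠ 0 := by exact_mod_cast Real.pi_ne_zero
  push_cast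
  field_simp

/-- `∫ ℱa · b = ∫ a · ℱb`. -/
lemma integral_SF_mul {n : ℕ} (a b : 𝓢(Eu n, ℂ)) :
    ∫ ξ, SF n a ξ * b ξ = ∫ x, a x * SF n b x := by
  let L : Eu n →ₗ[ℝ] Eu n →ₗ[ℝ] ℝ := (2 * π)⁻¹ • LinearMap.mk₂ ℝ (fun x y => dotp x y)
    (by intro x y z; simp [dotp, add_mul, Finset.sum_add_distrib])
    (by intro c x y; simp [dotp, Finset.mul_sum, mul_assoc])
    (by intro x y z; simp [dotp, mul_add, Finset.sum_add_distrib])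
    (by intro c x y; simp [dotp, Finset.mul_sum, mul_left_comm])
  have hL : ∀ x y, L x y = (2 * π)⁻¹ * dotp x y := fun x y => rfl
  have hcomm : ∀ x y : Eu n, dotp x y = dotp y x := by
    intro x y; simp [dotp, mul_comm]
  have hflip : L.flip = L := by
    ext x y; simp [hL, hcomm (Pi.single x 1)]
  have hcont : Continuous fun p : Eu n × Eu n => L p.1 p.2 := by
    simp only [hL, dotp]; fun_prop
  have key : ∀ (f : 𝓢(Eu n, ℂ)) ξ,
      SF n f ξ = VectorFourier.fourierIntegral Real.fourierChar volume L f ξ := by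
    intro f ξ
    rw [SF_apply, pF, VectorFourier.fourierIntegral]
    refine integral_congr_ae (Eventually.of_forall fun v => ?_)
    simp only [Circle.smul_def, Real.fourierChar_apply, smul_eq_mul, hL]
    congr 2
    have hp : (π : ℂ) ≠ 0 := by exact_mod_cast Real.pi_ne_zero
    push_cast
    field_simp
  have := VectorFourier.integral_fourierIntegral_smul_eq_flip (μ := volume) (ν := volume)
    (L := L) Real.continuous_fourierChar hcont a.integrable b.integrable
  rw [hflip] at this
  simp only [smul_eq_mul, ← key] at this
  exact this

/-- Product of two Schwartz functions. -/
def mulS {n : ℕ} (f g : 𝓢(Eu n, ℂ)) : 𝓢(Eu n, ℂ) := SchwartzMap.smulLeftCLM ℂ f g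

lemma mulS_apply {n : ℕ} (f g : 𝓢(Eu n, ℂ)) (x : Eu n) : mulS f g x = f x * g x := by
  rw [mulS, SchwartzMap.smulLeftCLM_apply_apply f.hasTemperateGrowth, smul_eq_mul]

/-- The Littlewood–Paley piece of a Schwartz function is `ℱ⁻¹(Φ ℱU)`. -/
lemma isLPpiece_schwartz {n : ℕ} (Φ U : 𝓢(Eu n, ℂ)) (T : TD n)
    (hT : Represents T (fun x => U x)) :
    IsLPpiece Φ T (SFi n (mulS Φ (SF n U))) := by
  refine ⟨SchwartzMap.continuous _, fun φ ψ χ hψ hχ => ?_⟩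
  obtain rfl : ψ = SFi n φ := by ext x; rw [hψ, SFi_apply]
  obtain rfl : χ = SF n (mulS Φ (SFi n φ)) := by
    ext x; rw [hχ, SF_apply]; simp only [mulS_apply]
  rw [hT, ← integral_SF_mul]
  have h1 : ∀ x, SF n U x * mulS Φ (SFi n φ) x =
      SF n (SFi n (mulS Φ (SF n U))) x * SFi n φ x := by
    intro x; rw [SF_SFi, mulS_apply, mulS_apply]; ring
  simp only [h1]
  rw [integral_SF_mul, SF_SFi]

/-- The pairing with test functions determines a continuous function, so the choice made in
`LPfun` is immaterial. -/
lemma IsLPpiece.unique {n : ℕ} {Φ : 𝓢(Eu n, ℂ)} {T : TD n} {g g' : Eu n → ℂ}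
    (hg : IsLPpiece Φ T g) (hg' : IsLPpiece Φ T g') : g = g' := by
  have : ∀ᵐ x ∂(volume : Measure (Eu n)), g x = g' x := by
    refine ae_eq_of_integral_contDiff_smul_eq hg.1.locallyIntegrable hg'.1.locallyIntegrable ?_
    intro h hh hc
    have hc' : HasCompactSupport (fun x => (h x : ℂ)) := hc.comp_left (g := fun x : ℝ => (x : ℂ)) rfl
    have hh' : ContDiff ℝ (⊤ : ℕ∞) (fun x => (h x : ℂ)) := Complex.ofRealCLM.contDiff.comp hh
    let φ : 𝓢(Eu n, ℂ) := hc'.toSchwartzMap hh'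
    have e := hg.2 φ (SFi n φ) (SF n (mulS Φ (SFi n φ))) (fun x => SFi_apply _ _)
      (fun x => by rw [SF_apply]; simp only [mulS_apply])
    have e' := hg'.2 φ (SFi n φ) (SF n (mulS Φ (SFi n φ))) (fun x => SFi_apply _ _)
      (fun x => by rw [SF_apply]; simp only [mulS_apply])
    have e2 : ∀ x, φ x = (h x : ℂ) := fun x => rfl
    have := e.symm.trans e'
    simp only [e2] at this
    simpa only [Complex.real_smul, mul_comm] using this
  exact (hg.1.ae_eq_iff_eq volume hg'.1).1 this

/-- The chosen Littlewood–Paley representative of a Schwartz function `U` is `ℱ⁻¹(Φ ℱU)`. -/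
lemma LPfun_eq {n : ℕ} (Φ U : 𝓢(Eu n, ℂ)) (T : TD n)
    (hT : Represents T (fun x => U x)) :
    LPfun Φ T = SFi n (mulS Φ (SF n U)) := by
  have h : ∃ g, IsLPpiece Φ T g := ⟨_, isLPpiece_schwartz Φ U T hT⟩
  rw [LPfun, dif_pos h]
  exact h.choose_spec.unique (isLPpiece_schwartz Φ U T hT)

/-! ### Tensor products, anisotropic dilations and the normal profile -/

/-- The projection `x ↦ x'` onto the first `m` coordinates. -/
def initL (m : ℕ) : Eu (m + 1) →L[ℝ] Eu m :=
  ContinuousLinearMap.pi fun i => ContinuousLinearMap.proj i.castSucc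

/-- The last coordinate `x ↦ xₙ`. -/
def lastL (m : ℕ) : Eu (m + 1) →L[ℝ] ℝ := ContinuousLinearMap.proj (Fin.last m)

lemma initL_apply {m : ℕ} (x : Eu (m + 1)) : initL m x = Fin.init x := rfl
lemma lastL_apply {m : ℕ} (x : Eu (m + 1)) : lastL m x = x (Fin.last m) := rfl

lemma norm_init_le {m : ℕ} (x : Eu (m + 1)) : ‖(Fin.init x : Eu m)‖ ≤ ‖x‖ :=
  (pi_norm_le_iff_of_nonneg (norm_nonneg _)).2 fun i => norm_le_pi_norm x i.castSucc

lemma norm_initL_le {m : ℕ} : ‖initL m‖ ≤ 1 :=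
  ContinuousLinearMap.opNorm_le_bound _ zero_le_one fun x => by
    rw [one_mul]; exact norm_init_le x

lemma norm_lastL_le {m : ℕ} : ‖lastL m‖ ≤ 1 :=
  ContinuousLinearMap.opNorm_le_bound _ zero_le_one fun x => by
    rw [one_mul]; exact norm_le_pi_norm x _

lemma norm_le_init_last {m : ℕ} (x : Eu (m + 1)) :
    ‖x‖ ≤ max ‖(Fin.init x : Eu m)‖ |x (Fin.last m)| := by
  refine (pi_norm_le_iff_of_nonneg (le_max_of_le_left (norm_nonneg _))).2 fun i => ?_
  refine Fin.lastCases ?_ (fun i => ?_) i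
  · exact le_max_right _ _
  · exact (norm_le_pi_norm (Fin.init x : Eu m) i).trans (le_max_left _ _)

lemma norm_iteratedFDeriv_comp_clm_le {E F : Type*} [NormedAddCommGroup E] [NormedSpace ℝ E]
    [NormedAddCommGroup F] [NormedSpace ℝ F] (f : 𝓢(F, ℂ)) (L : E →L[ℝ] F) {B : ℝ} (hL : ‖L‖ ≤ B)
    (n : ℕ) (x : E) :
    ‖iteratedFDeriv ℝ n (fun y => f (L y)) x‖ ≤ B ^ n * ‖iteratedFDeriv ℝ n f (L x)‖ := by
  have := L.iteratedFDeriv_comp_right (f.smooth n) x (i := n) le_rfl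
  have e : (fun y => f (L y)) = f ∘ L := rfl
  rw [e, this]
  refine (ContinuousMultilinearMap.norm_compContinuousLinearMap_le _ _).trans ?_
  simp only [Finset.prod_const, Finset.card_univ, Fintype.card_fin]
  rw [mul_comm]
  gcongr

/-- The tensor product `(x', xₙ) ↦ f(x') g(xₙ)` of Schwartz functions. -/
def tens {m : ℕ} (f : 𝓢(Eu m, ℂ)) (g : 𝓢(ℝ, ℂ)) : 𝓢(Eu (m + 1), ℂ) where
  toFun x := f (initL m x) * g (lastL m x)
  smooth' := ((f.smooth ⊤).comp (initL m).contDiff).mul ((g.smooth ⊤).comp (lastL m).contDiff)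
  decay' := by
    intro k n
    refine ⟨∑ a ∈ Finset.range (n + 1), (n.choose a : ℝ) *
      (SchwartzMap.seminorm ℝ k a f * SchwartzMap.seminorm ℝ 0 (n - a) g +
        SchwartzMap.seminorm ℝ 0 a f * SchwartzMap.seminorm ℝ k (n - a) g), fun x => ?_⟩
    have h1 := norm_iteratedFDeriv_mul_le (𝕜 := ℝ) (N := (⊤ : ℕ∞))
      ((f.smooth ⊤).comp (initL m).contDiff) ((g.smooth ⊤).comp (lastL m).contDiff) x (n := n)
      (by exact_mod_cast le_top)
    refine (mul_le_mul_of_nonneg_left h1 (by positivity)).trans ?_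
    rw [Finset.mul_sum]
    refine Finset.sum_le_sum fun a _ => ?_
    have ha := norm_iteratedFDeriv_comp_clm_le f (initL m) norm_initL_le a x
    have hb := norm_iteratedFDeriv_comp_clm_le g (lastL m) norm_lastL_le (n - a) x
    rw [one_pow, one_mul] at ha hb
    have hx : ‖x‖ ^ k ≤ ‖initL m x‖ ^ k + ‖lastL m x‖ ^ k := by
      refine (pow_le_pow_left₀ (norm_nonneg _) (norm_le_init_last x) k).trans ?_
      rcases le_total ‖(Fin.init x : Eu m)‖ |x (Fin.last m)| with h | h
      · rw [max_eq_right h]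
        exact le_add_of_nonneg_left (by positivity)
      · rw [max_eq_left h]
        exact le_add_of_nonneg_right (by positivity)
    have c1 := SchwartzMap.le_seminorm ℝ k a f (initL m x)
    have c2 := SchwartzMap.norm_iteratedFDeriv_le_seminorm ℝ f a (initL m x)
    have c3 := SchwartzMap.le_seminorm ℝ k (n - a) g (lastL m x)
    have c4 := SchwartzMap.norm_iteratedFDeriv_le_seminorm ℝ g (n - a) (lastL m x)
    calc ‖x‖ ^ k * ((n.choose a : ℝ) * ‖iteratedFDeriv ℝ a (f ∘ initL m) x‖ *
          ‖iteratedFDeriv ℝ (n - a) (g ∘ lastL m) x‖)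
        ≤ (‖initL m x‖ ^ k + ‖lastL m x‖ ^ k) * ((n.choose a : ℝ) *
          ‖iteratedFDeriv ℝ a f (initL m x)‖ * ‖iteratedFDeriv ℝ (n - a) g (lastL m x)‖) := by
          gcongr
          · exact ha
          · exact hb
      _ = (n.choose a : ℝ) * ((‖initL m x‖ ^ k * ‖iteratedFDeriv ℝ a f (initL m x)‖) *
          ‖iteratedFDeriv ℝ (n - a) g (lastL m x)‖ +
          ‖iteratedFDeriv ℝ a f (initL m x)‖ * (‖lastL m x‖ ^ k *
          ‖iteratedFDeriv ℝ (n - a) g (lastL m x)‖)) := by ring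
      _ ≤ _ := by gcongr

lemma tens_apply {m : ℕ} (f : 𝓢(Eu m, ℂ)) (g : 𝓢(ℝ, ℂ)) (x : Eu (m + 1)) :
    tens f g x = f (Fin.init x) * g (x (Fin.last m)) := rfl

/-- The scaling factors of the anisotropic dilation. -/
def dvec (m l : ℕ) (i : Fin (m + 1)) : ℝ := if i = Fin.last m then 2 ^ l else 1

lemma dvec_ne {m l : ℕ} (i : Fin (m + 1)) : dvec m l i ≠ 0 := by
  unfold dvec; split_ifs <;> positivity

/-- The anisotropic dilation `(x', xₙ) ↦ (x', 2^l xₙ)`. -/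
def dil (m l : ℕ) : Eu (m + 1) ≃L[ℝ] Eu (m + 1) :=
  ContinuousLinearEquiv.piCongrRight fun i =>
    ContinuousLinearEquiv.smulLeft (Units.mk0 (dvec m l i) (dvec_ne i))

lemma dil_apply {m l : ℕ} (x : Eu (m + 1)) (i : Fin (m + 1)) :
    dil m l x i = dvec m l i * x i := rfl

lemma dil_last {m l : ℕ} (x : Eu (m + 1)) :
    dil m l x (Fin.last m) = 2 ^ l * x (Fin.last m) := by simp [dil_apply, dvec]

lemma dil_castSucc {m l : ℕ} (x : Eu (m + 1)) (i : Fin m) :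
    dil m l x i.castSucc = x i.castSucc := by
  simp [dil_apply, dvec, (Fin.castSucc_lt_last i).ne]

lemma dil_init {m l : ℕ} (x : Eu (m + 1)) : (Fin.init (dil m l x) : Eu m) = Fin.init x := by
  ext i; exact dil_castSucc x i

/-- The anisotropic dilation scales Lebesgue measure by the single factor `2^l`. -/
lemma map_dil {m l : ℕ} : (volume : Measure (Eu (m + 1))) =
    ENNReal.ofReal (2 ^ l) • Measure.map (dil m l) volume := by
  have hdet : (Matrix.diagonal (dvec m l)).det = 2 ^ l := by
    rw [Matrix.det_diagonal, Fin.prod_univ_castSucc]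
    simp [dvec, (Fin.castSucc_lt_last _).ne]
  have := Real.smul_map_diagonal_volume_pi (D := dvec m l) (by rw [hdet]; positivity)
  rw [hdet, abs_of_pos (by positivity)] at this
  have e : (Matrix.toLin' (Matrix.diagonal (dvec m l)) : Eu (m + 1) → Eu (m + 1)) = dil m l := by
    ext x i
    simp [Matrix.mulVec_diagonal, dil_apply]
  rw [e] at this
  exact this.symm

lemma lintegral_dil {m l : ℕ} (f : Eu (m + 1) → ℝ≥0∞) :
    ∫⁻ x, f x = ENNReal.ofReal (2 ^ l) * ∫⁻ x, f (dil m l x) := by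
  conv_lhs => rw [map_dil (m := m) (l := l)]
  rw [lintegral_smul_measure, smul_eq_mul]
  congr 1
  exact (dil m l).toHomeomorph.measurableEmbedding.lintegral_map f

lemma integral_dil {m l : ℕ} (f : Eu (m + 1) → ℂ) :
    ∫ x, f x = (2 ^ l : ℂ) * ∫ x, f (dil m l x) := by
  conv_lhs => rw [map_dil (m := m) (l := l)]
  rw [integral_smul_measure, ENNReal.toReal_ofReal (by positivity), Complex.real_smul]
  push_cast
  congr 1
  exact (dil m l).toHomeomorph.measurableEmbedding.integral_map f

/-- `h ↦ h ∘ dil⁻¹` on Schwartz functions. -/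
def dilC (m l : ℕ) : 𝓢(Eu (m + 1), ℂ) →L[ℂ] 𝓢(Eu (m + 1), ℂ) :=
  SchwartzMap.compCLMOfContinuousLinearEquiv ℂ (dil m l).symm

/-- `h ↦ h ∘ dil` on Schwartz functions. -/
def dilD (m l : ℕ) : 𝓢(Eu (m + 1), ℂ) →L[ℂ] 𝓢(Eu (m + 1), ℂ) :=
  SchwartzMap.compCLMOfContinuousLinearEquiv ℂ (dil m l)

lemma dotp_dil {m l : ℕ} (x ξ : Eu (m + 1)) : dotp x (dil m l ξ) = dotp (dil m l x) ξ := by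
  simp only [dotp, dil_apply]
  refine Finset.sum_congr rfl fun i _ => by ring

/-- Inverse Fourier transform of a dilate; the factor `2^l` is the Jacobian. -/
lemma SFi_dilC {m l : ℕ} (h : 𝓢(Eu (m + 1), ℂ)) (x : Eu (m + 1)) :
    SFi _ (dilC m l h) x = (2 ^ l : ℂ) * SFi _ h (dil m l x) := by
  rw [SFi_apply, SFi_apply, pFinv, pFinv, integral_dil (l := l)]
  simp only [dotp_dil, dilC, SchwartzMap.compCLMOfContinuousLinearEquiv_apply, Function.comp,
    ContinuousLinearEquiv.symm_apply_apply, Complex.real_smul]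
  ring

/-- The inverse Fourier transform of a tensor product. -/
lemma SFi_tens {m : ℕ} (f : 𝓢(Eu m, ℂ)) (g : 𝓢(ℝ, ℂ)) (x : Eu (m + 1)) :
    SFi _ (tens f g) x = SFi _ f (Fin.init x) * pFinv1 g (x (Fin.last m)) := by
  rw [SFi_apply, SFi_apply, pFinv, pFinv, pFinv1]
  have hv := (volume_preserving_piFinSuccAbove (fun _ : Fin (m + 1) => ℝ) (Fin.last m)).symm
  rw [← hv.integral_comp (MeasurableEquiv.measurableEmbedding _)]
  have : ∀ p : ℝ × Eu m, Complex.exp (Complex.I *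
      (dotp x ((MeasurableEquiv.piFinSuccAbove (fun _ : Fin (m + 1) => ℝ) (Fin.last m)).symm p) : ℂ))
      * tens f g ((MeasurableEquiv.piFinSuccAbove (fun _ : Fin (m + 1) => ℝ) (Fin.last m)).symm p)
      = (Complex.exp (Complex.I * ((x (Fin.last m) * p.1 : ℝ) : ℂ)) * g p.1) *
        (Complex.exp (Complex.I * (dotp (Fin.init x) p.2 : ℂ)) * f p.2) := by
    rintro ⟨t, y⟩
    have e : (MeasurableEquiv.piFinSuccAbove (fun _ : Fin (m + 1) => ℝ) (Fin.last m)).symm (t, y)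
        = (Fin.snoc y t : Eu (m + 1)) := by
      simp [MeasurableEquiv.piFinSuccAbove, Fin.insertNthEquiv]
    rw [e, tens_apply, Fin.init_snoc, Fin.snoc_last]
    have : dotp x (Fin.snoc y t : Eu (m + 1)) = dotp (Fin.init x) y + x (Fin.last m) * t := by
      simp [dotp, Fin.sum_univ_castSucc, Fin.init]
    rw [this]
    push_cast
    rw [mul_add, Complex.exp_add]
    ring
  simp only [this]
  rw [Measure.volume_eq_prod, integral_prod_mul (f := fun t : ℝ => Complex.exp (Complex.I * ((x (Fin.last m) * t : ℝ) : ℂ)) * g t)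
    (g := fun y : Eu m => Complex.exp (Complex.I * (dotp (Fin.init x) y : ℂ)) * f y)]
  simp only [Complex.real_smul]
  push_cast
  rw [pow_succ, mul_inv]
  ring

/-- A one-dimensional profile with spectrum in `[7/10, 1]` and normalised `j`-th derivative: for
a nonnegative bump `b` on this interval, `(-i∂)^j ℱ⁻¹b (0) = (2π)⁻¹ ∫ σ^j b(σ) dσ > 0`. -/
lemma exists_profile (j : ℕ) : ∃ F : 𝓢(ℝ, ℂ), (∀ σ, F σ ≠ 0 → 7 / 10 ≤ σ ∧ σ ≤ 1) ∧
    ContDiff ℝ (⊤ : ℕ∞) (pFinv1 F) ∧ (-Complex.I) ^ j * iteratedDeriv j (pFinv1 F) 0 = 1 := by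
  let b : ContDiffBump (17 / 20 : ℝ) := ⟨1 / 10, 3 / 20, by norm_num, by norm_num⟩
  have hb : HasCompactSupport (fun x => (b x : ℂ)) :=
    b.hasCompactSupport.comp_left (g := fun x : ℝ => (x : ℂ)) rfl
  let B : 𝓢(ℝ, ℂ) := hb.toSchwartzMap (Complex.ofRealCLM.contDiff.comp b.contDiff)
  have hB : ∀ x, B x = (b x : ℂ) := fun x => rfl
  have hsupp : ∀ x, b x ≠ 0 → 7 / 10 ≤ x ∧ x ≤ 1 := by
    intro x hx
    have : x ∈ Function.support b := hx
    rw [b.support_eq, Metric.mem_ball, Real.dist_eq, abs_lt] at this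
    constructor <;> linarith [this.1, this.2]
  have hrep : ∀ (f : 𝓢(ℝ, ℂ)), pFinv1 f = fun t => ((2 * π)⁻¹ : ℝ) • (𝓕 f) ((-(2 * π)⁻¹ : ℝ) • t) := by
    intro f
    ext t
    rw [pFinv1, SchwartzMap.fourier_coe, Real.fourier_eq']
    congr 1
    refine integral_congr_ae (Eventually.of_forall fun v => ?_)
    simp only [smul_eq_mul]
    congr 2
    have hp : (π : ℂ) ≠ 0 := by exact_mod_cast Real.pi_ne_zero
    have : (inner ℝ v (-(2 * π)⁻¹ * t) : ℝ) = -(2 * π)⁻¹ * t * v := by simp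
    rw [this]
    push_cast
    field_simp
  have hlin : ∀ N : WithTop ℕ∞, ContDiff ℝ N (fun t : ℝ => (-(2 * π)⁻¹ : ℝ) • t) := fun N => by fun_prop
  have hsm : ∀ (f : 𝓢(ℝ, ℂ)), ContDiff ℝ (⊤ : ℕ∞) (pFinv1 f) := by
    intro f
    rw [hrep]
    exact (((𝓕 f).smooth ⊤).comp (hlin _)).const_smul _
  have hder : ∀ (f : 𝓢(ℝ, ℂ)), (-Complex.I) ^ j * iteratedDeriv j (pFinv1 f) 0 =
      ((2 * π)⁻¹ : ℝ) • ∫ x : ℝ, (x : ℂ) ^ j * f x := by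
    intro f
    have hs : ContDiff ℝ j (fun t : ℝ => (𝓕 f) ((-(2 * π)⁻¹ : ℝ) • t)) :=
      ((𝓕 f).smooth j).comp (hlin _)
    rw [hrep, iteratedDeriv_fun_const_smul (h := hs.contDiffAt)]
    simp only [smul_eq_mul]
    rw [iteratedDeriv_comp_const_smul ((𝓕 f).smooth j),
      SchwartzMap.fourier_coe, Real.iteratedDeriv_fourier (N := ⊤) _ le_top]
    · simp only [Complex.real_smul, smul_eq_mul]
      rw [Real.fourier_eq']
      simp only [inner_zero_right, mul_zero, smul_eq_mul, Complex.ofReal_zero, zero_mul, Complex.exp_zero, one_mul]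
      have : ∀ x : ℝ, (-2 * (π : ℂ) * Complex.I * x) ^ j * f x =
          (-2 * (π : ℂ) * Complex.I) ^ j * ((x : ℂ) ^ j * f x) := by
        intro x; ring
      simp only [this]
      rw [integral_const_mul]
      have hp : (π : ℂ) ≠ 0 := by exact_mod_cast Real.pi_ne_zero
      have h1 : (-Complex.I) ^ j * ((-(2 * π)⁻¹ : ℝ) ^ j : ℂ) * (-2 * (π : ℂ) * Complex.I) ^ j = 1 := by
        rw [← mul_pow, ← mul_pow]
        have : -Complex.I * ((-(2 * π)⁻¹ : ℝ) : ℂ) * (-2 * (π : ℂ) * Complex.I) = 1 := by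
          push_cast
          field_simp
          simp
        rw [this, one_pow]
      push_cast at h1 ⊢
      linear_combination ((2 * (π : ℂ))⁻¹ * ∫ x : ℝ, (x : ℂ) ^ j * f x) * h1
    · intro n _
      have := f.integrable_pow_mul volume n
      refine (this.mono' ?_ ?_)
      · exact ((continuous_pow n).smul f.continuous).aestronglyMeasurable
      · refine Eventually.of_forall fun x => ?_
        rw [norm_smul, norm_pow]
  set J : ℝ := ∫ x : ℝ, x ^ j * b x with hJ
  have hJpos : 0 < J := by
    refine (Continuous.integral_pos_of_hasCompactSupport_nonneg_nonzero (x := 17 / 20)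
      (by have := b.continuous; fun_prop) (b.hasCompactSupport.mul_left) ?_ ?_)
    · intro x
      by_cases hx : b x = 0
      · simp [hx]
      · exact mul_nonneg (pow_nonneg (by linarith [(hsupp x hx).1]) _) b.nonneg
    · rw [b.one_of_mem_closedBall (Metric.mem_closedBall_self b.rIn_pos.le)]
      positivity
  refine ⟨((2 * π * J⁻¹ : ℝ) : ℂ) • B, ?_, hsm _, ?_⟩
  · intro σ hσ
    refine hsupp σ fun h => hσ ?_
    simp [hB, h]
  · rw [hder]
    have : ∀ x : ℝ, (x : ℂ) ^ j * (((2 * π * J⁻¹ : ℝ) : ℂ) • B) x =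
        ((2 * π * J⁻¹ : ℝ) : ℂ) * ((x ^ j * b x : ℝ) : ℂ) := by
      intro x; simp [hB]; ring
    simp only [this]
    have hJ' : ∫ x : ℝ, ((x ^ j * b x : ℝ) : ℂ) = (J : ℂ) := integral_ofReal
    rw [integral_const_mul, hJ', Complex.real_smul]
    norm_cast
    field_simp

/-! ### The averaged sequence and its trace -/

/-- The spectrum `2^{-lj} û(ξ') 2^{-l} F(2^{-l} ξₙ)` of the `l`-th building block. -/
def blk {m : ℕ} (j : ℕ) (u : 𝓢(Eu m, ℂ)) (F : 𝓢(ℝ, ℂ)) (l : ℕ) : 𝓢(Eu (m + 1), ℂ) :=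
  ((((2 : ℂ) ^ l) ^ j)⁻¹ * ((2 : ℂ) ^ l)⁻¹) • dilC m l (tens (SF m u) F)

lemma SFi_blk {m : ℕ} (j : ℕ) (u : 𝓢(Eu m, ℂ)) (F : 𝓢(ℝ, ℂ)) (l : ℕ) (x : Eu (m + 1)) :
    SFi _ (blk j u F l) x =
      (((2 : ℂ) ^ l) ^ j)⁻¹ * (u (Fin.init x) * pFinv1 F (2 ^ l * x (Fin.last m))) := by
  rw [blk, map_smul, _root_.smul_apply, SFi_dilC, SFi_tens, SFi_SF, dil_init, dil_last,
    smul_eq_mul]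
  field_simp

/-- The average of the building blocks with index `k < l ≤ 2k + 1`. -/
def Useq {m : ℕ} (j : ℕ) (u : 𝓢(Eu m, ℂ)) (F : 𝓢(ℝ, ℂ)) (k : ℕ) : 𝓢(Eu (m + 1), ℂ) :=
  ((k : ℂ) + 1)⁻¹ • ∑ l ∈ Finset.Ico (k + 1) (2 * k + 2), SFi _ (blk j u F l)

lemma Useq_apply {m : ℕ} (j : ℕ) (u : 𝓢(Eu m, ℂ)) (F : 𝓢(ℝ, ℂ)) (k : ℕ) (x : Eu (m + 1)) :
    Useq j u F k x = ((k : ℂ) + 1)⁻¹ * ∑ l ∈ Finset.Ico (k + 1) (2 * k + 2),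
      SFi _ (blk j u F l) x := by
  rw [Useq, _root_.smul_apply, _root_.sum_apply, smul_eq_mul]

/-- Each building block has trace `u`, hence so has their average. -/
lemma traceJ_Useq {m : ℕ} (j : ℕ) (u : 𝓢(Eu m, ℂ)) (F : 𝓢(ℝ, ℂ))
    (hF : ContDiff ℝ (⊤ : ℕ∞) (pFinv1 F))
    (hF1 : (-Complex.I) ^ j * iteratedDeriv j (pFinv1 F) 0 = 1) (k : ℕ) (x' : Eu m) :
    traceJ j (fun x => Useq j u F k x) x' = u x' := by
  have hFj : ContDiff ℝ j (pFinv1 F) := hF.of_le (by exact_mod_cast le_top)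
  have hd : ∀ l : ℕ, ContDiff ℝ j fun t : ℝ => pFinv1 F (2 ^ l * t) := fun l =>
    hFj.comp (by fun_prop)
  have hD : ∀ l : ℕ, iteratedDeriv j (fun t : ℝ => pFinv1 F (2 ^ l * t)) 0 =
      ((2 : ℂ) ^ l) ^ j * iteratedDeriv j (pFinv1 F) 0 := by
    intro l
    rw [iteratedDeriv_comp_const_smul hFj]
    simp
  have e : (fun t : ℝ => Useq j u F k (Fin.snoc x' t : Eu (m + 1))) = fun t =>
      ∑ l ∈ Finset.Ico (k + 1) (2 * k + 2),
        (((k : ℂ) + 1)⁻¹ * (((2 : ℂ) ^ l) ^ j)⁻¹ * u x') * pFinv1 F (2 ^ l * t) := by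
    ext t
    rw [Useq_apply, Finset.mul_sum]
    refine Finset.sum_congr rfl fun l _ => ?_
    rw [SFi_blk, Fin.init_snoc, Fin.snoc_last]
    ring
  rw [traceJ, e, iteratedDeriv_fun_sum fun l _ => (contDiff_const.mul (hd l)).contDiffAt]
  have e2 : ∀ l : ℕ, iteratedDeriv j (fun t : ℝ =>
      (((k : ℂ) + 1)⁻¹ * (((2 : ℂ) ^ l) ^ j)⁻¹ * u x') * pFinv1 F (2 ^ l * t)) 0 =
      (((k : ℂ) + 1)⁻¹ * u x') * iteratedDeriv j (pFinv1 F) 0 := by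
    intro l
    have := iteratedDeriv_fun_const_smul (h := (hd l).contDiffAt (x := 0))
      (((k : ℂ) + 1)⁻¹ * (((2 : ℂ) ^ l) ^ j)⁻¹ * u x')
    simp only [smul_eq_mul] at this
    rw [this, hD]
    field_simp
  simp only [e2]
  rw [Finset.sum_const, Nat.card_Ico]
  have hk : ((k : ℂ) + 1) ≠ 0 := by exact_mod_cast Nat.succ_ne_zero k
  have h2 : 2 * k + 2 - (k + 1) = k + 1 := by omega
  rw [h2, nsmul_eq_mul]
  push_cast
  have : (-Complex.I) ^ j * (((k : ℂ) + 1) * (((k : ℂ) + 1)⁻¹ * u x' *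
      iteratedDeriv j (pFinv1 F) 0)) = u x' * ((-Complex.I) ^ j * iteratedDeriv j (pFinv1 F) 0) := by
    field_simp
  rw [this, hF1, mul_one]

/-- The function `Φ(ξ', 2^l ξₙ) P(ξ)`: with `P = ℱu ⊗ F`, the symbol of the Littlewood–Paley piece
of the `l`-th building block after rescaling `ξₙ` by `2^l`. -/
def Gil {m : ℕ} (Φ : 𝓢(Eu (m + 1), ℂ)) (P : 𝓢(Eu (m + 1), ℂ)) (l : ℕ) : 𝓢(Eu (m + 1), ℂ) :=
  mulS (dilD m l Φ) P

lemma Gil_apply {m : ℕ} (Φ P : 𝓢(Eu (m + 1), ℂ)) (l : ℕ) (ξ : Eu (m + 1)) :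
    Gil Φ P l ξ = Φ (dil m l ξ) * P ξ := by
  rw [Gil, mulS_apply]; rfl

lemma mulS_dilC {m : ℕ} (Φ P : 𝓢(Eu (m + 1), ℂ)) (l : ℕ) :
    mulS Φ (dilC m l P) = dilC m l (Gil Φ P l) := by
  ext x
  rw [mulS_apply]
  simp only [dilC, SchwartzMap.compCLMOfContinuousLinearEquiv_apply, Function.comp, Gil_apply,
    ContinuousLinearEquiv.apply_symm_apply]

/-- The Littlewood–Paley pieces of the averaged sequence, with the normal variable of each block
rescaled to unit frequency. -/
lemma piece_Useq {m : ℕ} (j : ℕ) (u : 𝓢(Eu m, ℂ)) (F : 𝓢(ℝ, ℂ)) (k : ℕ)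
    (Φ : 𝓢(Eu (m + 1), ℂ)) (x : Eu (m + 1)) :
    SFi _ (mulS Φ (SF _ (Useq j u F k))) x =
      ((k : ℂ) + 1)⁻¹ * ∑ l ∈ Finset.Ico (k + 1) (2 * k + 2),
        (((2 : ℂ) ^ l) ^ j)⁻¹ * SFi _ (Gil Φ (tens (SF m u) F) l) (dil m l x) := by
  have hS : SF _ (Useq j u F k) =
      ((k : ℂ) + 1)⁻¹ • ∑ l ∈ Finset.Ico (k + 1) (2 * k + 2), blk j u F l := by
    have : Useq j u F k = SFi _ (((k : ℂ) + 1)⁻¹ • ∑ l ∈ Finset.Ico (k + 1) (2 * k + 2),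
        blk j u F l) := by rw [map_smul, map_sum, Useq]
    rw [this, SF_SFi]
  have hb : ∀ l, SFi _ (mulS Φ (blk j u F l)) x =
      (((2 : ℂ) ^ l) ^ j)⁻¹ * SFi _ (Gil Φ (tens (SF m u) F) l) (dil m l x) := by
    intro l
    have : mulS Φ (blk j u F l) = ((((2 : ℂ) ^ l) ^ j)⁻¹ * ((2 : ℂ) ^ l)⁻¹) •
        dilC m l (Gil Φ (tens (SF m u) F) l) := by
      rw [← mulS_dilC, blk, mulS, mulS, map_smul]
    rw [this, map_smul, _root_.smul_apply, SFi_dilC, smul_eq_mul]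
    field_simp
  have : mulS Φ (SF _ (Useq j u F k)) = ((k : ℂ) + 1)⁻¹ •
      ∑ l ∈ Finset.Ico (k + 1) (2 * k + 2), mulS Φ (blk j u F l) := by
    rw [hS, mulS, map_smul, map_sum]; rfl
  rw [this, map_smul, map_sum, _root_.smul_apply, _root_.sum_apply, smul_eq_mul]
  simp only [hb]

/-! ### Symbol estimates for the building blocks -/

lemma eun_nonneg {n : ℕ} (x : Eu n) : 0 ≤ eun x := Real.sqrt_nonneg _

lemma eun_smul {n : ℕ} {c : ℝ} (hc : 0 ≤ c) (x : Eu n) : eun (c • x) = c * eun x := by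
  have : ∑ i, (c • x) i ^ 2 = c ^ 2 * ∑ i, x i ^ 2 := by
    simp [Finset.mul_sum, mul_pow]
  rw [eun, this, Real.sqrt_mul (sq_nonneg c), Real.sqrt_sq hc, eun]

lemma abs_le_eun {n : ℕ} (x : Eu n) (i : Fin n) : |x i| ≤ eun x :=
  Real.abs_le_sqrt (Finset.single_le_sum (f := fun i => x i ^ 2) (fun _ _ => sq_nonneg _)
    (Finset.mem_univ i))

lemma eun_dil_sq {m l : ℕ} (x : Eu (m + 1)) :
    eun (dil m l x) ^ 2 ≤ m * ‖x‖ ^ 2 + (2 ^ l * x (Fin.last m)) ^ 2 := by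
  rw [eun, Real.sq_sqrt (Finset.sum_nonneg fun _ _ => sq_nonneg _), Fin.sum_univ_castSucc,
    dil_last]
  gcongr
  have : ∀ i ∈ (Finset.univ : Finset (Fin m)), dil m l x i.castSucc ^ 2 ≤ ‖x‖ ^ 2 := by
    intro i _
    rw [dil_castSucc, sq_le_sq, abs_norm]
    exact norm_le_pi_norm x i.castSucc
  simpa using Finset.sum_le_card_nsmul _ _ _ this

/-- The Littlewood–Paley symbols of positive index are dilates of the first one. -/
lemma LPsym_scale {n : ℕ} (Ψ : ℝ → ℝ) {i : ℕ} (hi : 1 ≤ i) (η : Eu n) :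
    LPsym Ψ i η = LPsym Ψ 1 ((2 : ℝ) ^ (1 - (i : ℝ)) • η) := by
  have h1 : (i ≠ 0) := by omega
  simp only [LPsym, h1, if_false, one_ne_zero]
  rw [eun_smul (by positivity), ← mul_assoc, ← mul_assoc, ← Real.rpow_add two_pos,
    ← Real.rpow_add two_pos]
  push_cast
  congr 4 <;> ring_nf

lemma LPsym_eq_zero_of_large {n : ℕ} {Ψ : ℝ → ℝ} (hΨ : GoodPsi Ψ) {i : ℕ} {η : Eu n}
    (h : 13 / 10 * 2 ^ i ≤ eun η) : LPsym Ψ i η = 0 := by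
  have h1 : 13 / 10 ≤ (2 : ℝ) ^ (-(i : ℝ)) * eun η := by
    rw [Real.rpow_neg two_pos.le, Real.rpow_natCast, inv_mul_eq_div, le_div_iff₀ (by positivity)]
    exact h
  have h2 : (2 : ℝ) ^ (1 - (i : ℝ)) = 2 * (2 : ℝ) ^ (-(i : ℝ)) := by
    rw [sub_eq_add_neg, Real.rpow_add two_pos, Real.rpow_one]
  have h3 : 13 / 10 ≤ (2 : ℝ) ^ (1 - (i : ℝ)) * eun η := by
    rw [h2, mul_assoc]; linarith
  rw [LPsym, hΨ.2.2 _ h1, hΨ.2.2 _ h3]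
  simp

lemma LPsym_eq_zero_of_small {n : ℕ} {Ψ : ℝ → ℝ} (hΨ : GoodPsi Ψ) {i : ℕ} (hi : 1 ≤ i)
    {η : Eu n} (h : 2 * eun η ≤ 11 / 10 * 2 ^ i) : LPsym Ψ i η = 0 := by
  have h1 : (2 : ℝ) ^ (-(i : ℝ)) * (2 * eun η) ≤ 11 / 10 := by
    rw [Real.rpow_neg two_pos.le, Real.rpow_natCast, inv_mul_eq_div, div_le_iff₀ (by positivity)]
    exact h
  have h2 : (2 : ℝ) ^ (1 - (i : ℝ)) = 2 * (2 : ℝ) ^ (-(i : ℝ)) := by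
    rw [sub_eq_add_neg, Real.rpow_add two_pos, Real.rpow_one]
  have h0 : 0 ≤ (2 : ℝ) ^ (-(i : ℝ)) * eun η := mul_nonneg (by positivity) (eun_nonneg _)
  have h3 : (2 : ℝ) ^ (1 - (i : ℝ)) * eun η ≤ 11 / 10 := by
    rw [h2]; linarith
  have h4 : (2 : ℝ) ^ (-(i : ℝ)) * eun η ≤ 11 / 10 := by linarith
  rw [LPsym, hΨ.2.1 _ h3, hΨ.2.1 _ h4, if_neg (by omega), sub_self]

section symbols
variable {m : ℕ} {Ψ : ℝ → ℝ} {Φn : ℕ → 𝓢(Eu (m + 1), ℂ)} {f : 𝓢(Eu m, ℂ)} {F : 𝓢(ℝ, ℂ)}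

/-- For `i < l` the symbol vanishes: on its support `2^l ξₙ ≥ (7/5) 2^i`, beyond the support of
the `i`-th Littlewood–Paley symbol. -/
lemma Gil_eq_zero (hΨ : GoodPsi Ψ) (hΦn : IsLP Ψ Φn)
    (hF : ∀ σ, F σ ≠ 0 → 7 / 10 ≤ σ ∧ σ ≤ 1) {i l : ℕ} (hil : i < l) :
    Gil (Φn i) (tens f F) l = 0 := by
  ext ξ
  rw [Gil_apply, tens_apply, zero_apply]
  by_cases h : F (ξ (Fin.last m)) = 0
  · simp [h]
  · have h1 := (hF _ h).1
    have h2 : 13 / 10 * 2 ^ i ≤ eun (dil m l ξ) := by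
      refine le_trans ?_ ((le_abs_self _).trans (abs_le_eun _ (Fin.last m)))
      rw [dil_last]
      have : (2 : ℝ) ^ (i + 1) ≤ 2 ^ l := pow_le_pow_right₀ one_le_two hil
      rw [pow_succ] at this
      have h0 : (0 : ℝ) < 2 ^ i := by positivity
      nlinarith
    rw [hΦn, LPsym_eq_zero_of_large hΨ h2]
    simp

/-- For `i > l` the symbol lives where `‖ξ‖ ≳ 2^i`: the normal frequency `2^l ξₙ` is at most
`2^i / 2`, too small to reach the `i`-th annulus without a large `ξ'`. -/
lemma Gil_support (hm : 1 ≤ m) (hΨ : GoodPsi Ψ) (hΦn : IsLP Ψ Φn)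
    (hF : ∀ σ, F σ ≠ 0 → 7 / 10 ≤ σ ∧ σ ≤ 1) {i l : ℕ} (hil : l < i) {ξ : Eu (m + 1)}
    (h : Gil (Φn i) (tens f F) l ξ ≠ 0) : 2 ^ i ≤ 5 * m * ‖ξ‖ := by
  rw [Gil_apply, tens_apply] at h
  have hσ := hF _ (right_ne_zero_of_mul (right_ne_zero_of_mul h))
  have hΦ := left_ne_zero_of_mul h
  have hlow : 11 / 10 * 2 ^ i < 2 * eun (dil m l ξ) := by
    by_contra hc
    rw [not_lt] at hc
    rw [hΦn, LPsym_eq_zero_of_small hΨ (by omega) hc] at hΦ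
    simp at hΦ
  have hup := eun_dil_sq (l := l) ξ
  have hl : (2 : ℝ) ^ (l + 1) ≤ 2 ^ i := pow_le_pow_right₀ one_le_two hil
  rw [pow_succ] at hl
  have hl0 : (0 : ℝ) < 2 ^ l := by positivity
  have hi0 : (0 : ℝ) < 2 ^ i := by positivity
  have h1 : (2 ^ l * ξ (Fin.last m)) ^ 2 ≤ (2 ^ i / 2) ^ 2 := by
    have : 2 ^ l * ξ (Fin.last m) ≤ 2 ^ i / 2 := by nlinarith
    exact pow_le_pow_left₀ (mul_nonneg hl0.le (by linarith)) this 2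
  have h2 : (11 / 10 * 2 ^ i) ^ 2 ≤ (2 * eun (dil m l ξ)) ^ 2 :=
    pow_le_pow_left₀ (by positivity) hlow.le 2
  have hm' : (1 : ℝ) ≤ m := by exact_mod_cast hm
  have h3 : (m : ℝ) * ‖ξ‖ ^ 2 ≤ (m * ‖ξ‖) ^ 2 := by
    rw [mul_pow, sq (m : ℝ)]
    nlinarith [sq_nonneg ‖ξ‖, mul_nonneg (mul_nonneg (by linarith : (0 : ℝ) ≤ m) (sq_nonneg ‖ξ‖)) (by linarith : (0 : ℝ) ≤ m - 1)]
  refine le_of_sq_le_sq ?_ (by positivity)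
  nlinarith [sq_nonneg ((2 : ℝ) ^ i)]

/-- The linear map `ξ ↦ 2^{1-i} (ξ', 2^l ξₙ)`, which reduces the `i`-th Littlewood–Paley symbol to
the first one; it is bounded uniformly in `l ≤ i`. -/
def scL (m i l : ℕ) : Eu (m + 1) →L[ℝ] Eu (m + 1) :=
  (2 : ℝ) ^ (1 - (i : ℝ)) • (dil m l : Eu (m + 1) →L[ℝ] Eu (m + 1))

lemma norm_scL_le {i l : ℕ} (hil : l ≤ i) : ‖scL m i l‖ ≤ 2 := by
  refine ContinuousLinearMap.opNorm_le_bound _ zero_le_two fun x => ?_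
  refine (pi_norm_le_iff_of_nonneg (by positivity)).2 fun a => ?_
  have e : scL m i l x a = (2 : ℝ) ^ (1 - (i : ℝ)) * (dvec m l a * x a) := rfl
  have hd : |dvec m l a| ≤ 2 ^ i := by
    unfold dvec
    split_ifs
    · rw [abs_of_pos (by positivity)]; exact pow_le_pow_right₀ one_le_two hil
    · rw [abs_one]; exact one_le_pow₀ one_le_two
  have h2 : (2 : ℝ) ^ (1 - (i : ℝ)) * 2 ^ i = 2 := by
    rw [← Real.rpow_natCast, ← Real.rpow_add two_pos]; simp
  rw [e, norm_mul, norm_mul, Real.norm_of_nonneg (by positivity), Real.norm_eq_abs (dvec m l a)]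
  calc (2 : ℝ) ^ (1 - (i : ℝ)) * (|dvec m l a| * ‖x a‖)
      ≤ (2 : ℝ) ^ (1 - (i : ℝ)) * (2 ^ i * ‖x‖) := by
        gcongr
        exact norm_le_pi_norm x a
    _ = 2 * ‖x‖ := by rw [← mul_assoc, h2]

lemma dilD_eq (hΦn : IsLP Ψ Φn) {i : ℕ} (hi : 1 ≤ i) (l : ℕ) (ξ : Eu (m + 1)) :
    Φn i (dil m l ξ) = Φn 1 (scL m i l ξ) := by
  rw [hΦn, hΦn, LPsym_scale Ψ hi]; rfl

/-- Leibniz estimate for the derivatives of the rescaled symbols, uniform in `i ≥ max(l, 1)`. -/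
lemma Gil_deriv_le (hΦn : IsLP Ψ Φn) {P : 𝓢(Eu (m + 1), ℂ)} {i l : ℕ} (hi : 1 ≤ i) (hil : l ≤ i)
    (n : ℕ) (ξ : Eu (m + 1)) :
    ‖iteratedFDeriv ℝ n (Gil (Φn i) P l) ξ‖ ≤ ∑ a ∈ Finset.range (n + 1), (n.choose a : ℝ) *
      (2 ^ a * SchwartzMap.seminorm ℝ 0 a (Φn 1)) * ‖iteratedFDeriv ℝ (n - a) P ξ‖ := by
  have e : (Gil (Φn i) P l : Eu (m + 1) → ℂ) = fun ξ => Φn 1 (scL m i l ξ) * P ξ := by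
    ext ξ; rw [Gil_apply, dilD_eq hΦn hi]
  rw [e]
  refine (norm_iteratedFDeriv_mul_le (𝕜 := ℝ) (N := (⊤ : ℕ∞))
      (((Φn 1).smooth ⊤).comp (scL m i l).contDiff) (P.smooth ⊤) ξ (n := n)
      (by exact_mod_cast le_top)).trans ?_
  refine Finset.sum_le_sum fun a _ => ?_
  gcongr
  refine (norm_iteratedFDeriv_comp_clm_le (Φn 1) (scL m i l) (norm_scL_le hil) a ξ).trans ?_
  gcongr
  exact SchwartzMap.norm_iteratedFDeriv_le_seminorm ℝ _ _ _

/-- The Schwartz seminorms of the rescaled symbols are `O(2^{-M(i-l)})` for every `M`: the support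
condition `‖ξ‖ ≳ 2^i` is played off against the rapid decay of `ℱu ⊗ F`. -/
lemma Gil_seminorm_le (hm : 1 ≤ m) (hΨ : GoodPsi Ψ) (hΦn : IsLP Ψ Φn)
    (hF : ∀ σ, F σ ≠ 0 → 7 / 10 ≤ σ ∧ σ ≤ 1) (M k n : ℕ) :
    ∃ C : ℝ, 0 ≤ C ∧ ∀ i l : ℕ, 1 ≤ l → l ≤ i →
      SchwartzMap.seminorm ℂ k n (Gil (Φn i) (tens f F) l) ≤ C * ((2 ^ (i - l)) ^ M)⁻¹ := by
  set P := tens f F with hP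
  let S : ℕ → ℝ := fun r => ∑ a ∈ Finset.range (n + 1), (n.choose a : ℝ) *
      (2 ^ a * SchwartzMap.seminorm ℝ 0 a (Φn 1)) * SchwartzMap.seminorm ℝ r (n - a) P
  have hS0 : ∀ r, 0 ≤ S r := fun r => Finset.sum_nonneg fun a _ => by positivity
  have hbd : ∀ (r i l : ℕ), 1 ≤ i → l ≤ i → ∀ ξ : Eu (m + 1),
      ‖ξ‖ ^ r * ‖iteratedFDeriv ℝ n (Gil (Φn i) P l) ξ‖ ≤ S r := by
    intro r i l hi hil ξ
    refine (mul_le_mul_of_nonneg_left (Gil_deriv_le hΦn hi hil n ξ) (by positivity)).trans ?_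
    rw [Finset.mul_sum]
    refine Finset.sum_le_sum fun a _ => ?_
    have := SchwartzMap.le_seminorm ℝ r (n - a) P ξ
    calc _ = (n.choose a : ℝ) * (2 ^ a * SchwartzMap.seminorm ℝ 0 a (Φn 1)) *
          (‖ξ‖ ^ r * ‖iteratedFDeriv ℝ (n - a) P ξ‖) := by ring
      _ ≤ _ := by gcongr
  refine ⟨S k + (5 * m) ^ M * S (k + M),
    add_nonneg (hS0 _) (mul_nonneg (by positivity) (hS0 _)), fun i l hl hil => ?_⟩
  have hnn : 0 ≤ (S k + (5 * m) ^ M * S (k + M)) * (((2 : ℝ) ^ (i - l)) ^ M)⁻¹ :=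
    mul_nonneg (add_nonneg (hS0 _) (mul_nonneg (by positivity) (hS0 _))) (by positivity)
  refine SchwartzMap.seminorm_le_bound ℂ k n _ hnn fun ξ => ?_
  rcases hil.eq_or_lt with rfl | hlt
  · simp only [Nat.sub_self, pow_zero, one_pow, inv_one, mul_one]
    refine (hbd k l l hl le_rfl ξ).trans (le_add_of_nonneg_right ?_)
    exact mul_nonneg (by positivity) (hS0 _)
  · by_cases hz : iteratedFDeriv ℝ n (Gil (Φn i) P l) ξ = 0
    · rw [hz, norm_zero, mul_zero]; exact hnn
    have hcl : IsClosed {ξ : Eu (m + 1) | (2 : ℝ) ^ i ≤ 5 * m * ‖ξ‖} :=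
      isClosed_le continuous_const (by fun_prop)
    have hts : tsupport (Gil (Φn i) P l) ⊆ {ξ : Eu (m + 1) | (2 : ℝ) ^ i ≤ 5 * m * ‖ξ‖} :=
      closure_minimal (fun ξ hξ => Gil_support hm hΨ hΦn hF hlt hξ) hcl
    have hξ : (2 : ℝ) ^ i ≤ 5 * m * ‖ξ‖ :=
      hts (support_iteratedFDeriv_subset (𝕜 := ℝ) n hz)
    have h1 : ((2 : ℝ) ^ (i - l)) ^ M ≤ (5 * m) ^ M * ‖ξ‖ ^ M := by
      rw [← mul_pow]
      refine pow_le_pow_left₀ (by positivity) (le_trans ?_ hξ) M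
      exact pow_le_pow_right₀ one_le_two (Nat.sub_le _ _)
    rw [← div_eq_mul_inv, le_div_iff₀ (by positivity)]
    calc ‖ξ‖ ^ k * ‖iteratedFDeriv ℝ n (Gil (Φn i) P l) ξ‖ * ((2 : ℝ) ^ (i - l)) ^ M
        ≤ ‖ξ‖ ^ k * ‖iteratedFDeriv ℝ n (Gil (Φn i) P l) ξ‖ * ((5 * m) ^ M * ‖ξ‖ ^ M) := by
          gcongr
      _ = (5 * m) ^ M * (‖ξ‖ ^ (k + M) * ‖iteratedFDeriv ℝ n (Gil (Φn i) P l) ξ‖) := by ring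
      _ ≤ (5 * m) ^ M * S (k + M) := by
          gcongr
          exact hbd _ i l (hl.trans hil) hil ξ
      _ ≤ _ := le_add_of_nonneg_left (hS0 k)

/-- Decay of the rescaled pieces, rapidly decreasing in `i - l`; this transfers `Gil_seminorm_le`
by continuity of the inverse Fourier transform on Schwartz space. -/
lemma SFi_Gil_le (hm : 1 ≤ m) (hΨ : GoodPsi Ψ) (hΦn : IsLP Ψ Φn)
    (hF : ∀ σ, F σ ≠ 0 → 7 / 10 ≤ σ ∧ σ ≤ 1) (M K : ℕ) :
    ∃ C : ℝ, 0 ≤ C ∧ ∀ i l : ℕ, 1 ≤ l → l ≤ i → ∀ y,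
      ‖SFi _ (Gil (Φn i) (tens f F) l) y‖ ≤
        C * ((2 ^ (i - l)) ^ M)⁻¹ * ((1 + ‖y‖) ^ K)⁻¹ := by
  let q : Seminorm ℂ 𝓢(Eu (m + 1), ℂ) :=
    ((Finset.Iic (K, 0)).sup (schwartzSeminormFamily ℂ (Eu (m + 1)) ℂ)).comp
      (SFi (m + 1)).toLinearMap
  have hq0 : Continuous ((Finset.Iic (K, 0)).sup (schwartzSeminormFamily ℂ (Eu (m + 1)) ℂ) :
      Seminorm ℂ 𝓢(Eu (m + 1), ℂ)) := by
    exact (schwartz_withSeminorms ℂ (Eu (m + 1)) ℂ).finset_sups.continuous_seminorm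
      (Finset.Iic (K, 0))
  have hq : Continuous q := hq0.comp (SFi (m + 1)).continuous
  obtain ⟨s, c, -, hsc⟩ := Seminorm.bound_of_continuous
    (schwartz_withSeminorms ℂ (Eu (m + 1)) ℂ) q hq
  choose B hB0 hB using fun a : ℕ × ℕ => Gil_seminorm_le (f := f) hm hΨ hΦn hF M a.1 a.2
  refine ⟨2 ^ K * (c * ∑ a ∈ s, B a), mul_nonneg (by positivity)
    (mul_nonneg c.2 (Finset.sum_nonneg fun a _ => hB0 a)), fun i l hl hil y => ?_⟩
  set G := Gil (Φn i) (tens f F) l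
  have h1 := SchwartzMap.one_add_le_sup_seminorm_apply (𝕜 := ℂ) (m := (K, 0)) le_rfl le_rfl
    (SFi _ G) y
  rw [norm_iteratedFDeriv_zero] at h1
  have h2 : ((Finset.Iic (K, 0)).sup (schwartzSeminormFamily ℂ (Eu (m + 1)) ℂ)) (SFi _ G) ≤
      c * (s.sup (schwartzSeminormFamily ℂ (Eu (m + 1)) ℂ)) G := hsc G
  have h3 : (s.sup (schwartzSeminormFamily ℂ (Eu (m + 1)) ℂ)) G ≤
      (∑ a ∈ s, B a) * ((2 ^ (i - l)) ^ M)⁻¹ := by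
    refine Seminorm.finset_sup_apply_le (mul_nonneg (Finset.sum_nonneg fun a _ => hB0 a)
      (by positivity)) fun a ha => ?_
    refine (hB a i l hl hil).trans ?_
    gcongr
    exact Finset.single_le_sum (fun a _ => hB0 a) ha
  rw [← div_eq_mul_inv _ ((1 + ‖y‖) ^ K), le_div_iff₀ (by positivity), mul_comm]
  refine h1.trans ?_
  have h4 := h2.trans (mul_le_mul_of_nonneg_left h3 c.2)
  calc _ ≤ 2 ^ K * (c * ((∑ a ∈ s, B a) * ((2 ^ (i - l)) ^ M)⁻¹)) :=
        mul_le_mul_of_nonneg_left h4 (by positivity)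
    _ = _ := by ring

end symbols

/-! ### Pointwise bound for the Littlewood–Paley pieces -/

/-- The geometric factor `2^{-(i-l)}`, for `l ≤ i`. -/
def eil (i l : ℕ) : ℝ≥0∞ := if l ≤ i then 2⁻¹ ^ (i - l) else 0

/-- The overlap of the `i`-th frequency annulus with the blocks `k < l ≤ 2k + 1`. -/
def Dk (k i : ℕ) : ℝ≥0∞ := ∑ l ∈ Finset.Ico (k + 1) (2 * k + 2), eil i l

lemma tsum_half : ∑' i : ℕ, (2⁻¹ : ℝ≥0∞) ^ i = 2 := by
  rw [ENNReal.tsum_geometric, ENNReal.one_sub_inv_two, inv_inv]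

lemma tsum_eil (l : ℕ) : ∑' i, eil i l = 2 := by
  have := Summable.sum_add_tsum_nat_add' (f := fun i => eil i l) (k := l) ENNReal.summable
  rw [← this, Finset.sum_eq_zero, zero_add]
  · have : ∀ i, eil (i + l) l = 2⁻¹ ^ i := fun i => by simp [eil]
    simp only [this, tsum_half]
  · intro i hi
    rw [Finset.mem_range] at hi
    simp [eil, hi]

lemma Dk_le_two (k i : ℕ) : Dk k i ≤ 2 := by
  calc Dk k i ≤ ∑' l, eil i l := ENNReal.sum_le_tsum _
    _ = ∑ l ∈ Finset.range (i + 1), eil i l := by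
        refine tsum_eq_sum fun l hl => ?_
        rw [Finset.mem_range] at hl
        simp [eil]; omega
    _ = ∑ l ∈ Finset.range (i + 1), (2⁻¹ : ℝ≥0∞) ^ l := by
        rw [← Finset.sum_range_reflect (fun l => (2⁻¹ : ℝ≥0∞) ^ l)]
        refine Finset.sum_congr rfl fun l hl => ?_
        rw [Finset.mem_range] at hl
        rw [eil, if_pos (by omega)]
        congr 1
    _ ≤ 2 := (ENNReal.sum_le_tsum _).trans_eq tsum_half

lemma tsum_Dk (k : ℕ) : ∑' i, Dk k i = 2 * ((k : ℝ≥0∞) + 1) := by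
  unfold Dk
  rw [Summable.tsum_finsetSum fun _ _ => ENNReal.summable]
  simp only [tsum_eil]
  rw [Finset.sum_const, Nat.card_Ico, nsmul_eq_mul, mul_comm]
  have h2 : 2 * k + 2 - (k + 1) = k + 1 := by omega
  rw [h2]; push_cast; rfl

/-- The coefficients `A_{k,i}` of the averaged sequence: `Dk k i` divided by the number `k + 1` of
blocks. -/
def Ak (k i : ℕ) : ℝ≥0∞ := ((k : ℝ≥0∞) + 1)⁻¹ * Dk k i

lemma Ak_le (k i : ℕ) : Ak k i ≤ ((k : ℝ≥0∞) + 1)⁻¹ * 2 := by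
  unfold Ak; gcongr; exact Dk_le_two k i

lemma Ak_ne_top (k i : ℕ) : Ak k i ≠ ⊤ :=
  ne_top_of_le_ne_top (ENNReal.mul_ne_top (by simp) (by simp)) (Ak_le k i)

lemma tendsto_inv_succ : Tendsto (fun k : ℕ => ((k : ℝ≥0∞) + 1)⁻¹) atTop (𝓝 0) := by
  have := (tendsto_add_atTop_iff_nat 1).2 ENNReal.tendsto_inv_nat_nhds_zero
  simpa using this

/-- Averaging makes every `ℓ_r`-norm with `r > 1` tend to zero, by interpolation between
`sup_i A_{k,i} ≤ 2/(k+1)` and `∑_i A_{k,i} = 2`. -/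
lemma tendsto_tsum_Ak {r : ℝ} (hr : 1 < r) :
    Tendsto (fun k => ∑' i, Ak k i ^ r) atTop (𝓝 0) := by
  have hb : ∀ k, ∑' i, Ak k i ^ r ≤ 2 ^ r * (((k : ℝ≥0∞) + 1)⁻¹) ^ (r - 1) := by
    intro k
    have hk0 : ((k : ℝ≥0∞) + 1) ≠ 0 := by simp
    have hkt : ((k : ℝ≥0∞) + 1) ≠ ⊤ := by simp
    have hi : ((k : ℝ≥0∞) + 1)⁻¹ ≠ 0 := by simp
    have hit : ((k : ℝ≥0∞) + 1)⁻¹ ≠ ⊤ := by simp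
    have h1 : ∀ i, Ak k i ^ r ≤ (((k : ℝ≥0∞) + 1)⁻¹ * 2) ^ (r - 1) * Ak k i := by
      intro i
      have : Ak k i ^ r = Ak k i ^ (r - 1) * Ak k i := by
        conv_rhs => rw [← ENNReal.rpow_one (Ak k i), ← ENNReal.rpow_mul, one_mul]
        rw [← ENNReal.rpow_add_of_nonneg _ _ (by linarith) zero_le_one]
        congr 1; ring
      rw [this]
      gcongr
      exact Ak_le k i
    calc ∑' i, Ak k i ^ r ≤ ∑' i, (((k : ℝ≥0∞) + 1)⁻¹ * 2) ^ (r - 1) * Ak k i :=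
          ENNReal.tsum_le_tsum h1
      _ = (((k : ℝ≥0∞) + 1)⁻¹ * 2) ^ (r - 1) * 2 := by
          unfold Ak
          rw [ENNReal.tsum_mul_left, ENNReal.tsum_mul_left, tsum_Dk]
          rw [mul_left_comm _ 2, ENNReal.inv_mul_cancel hk0 hkt, mul_one]
      _ = _ := by
          rw [ENNReal.mul_rpow_of_nonneg _ _ (by linarith), mul_assoc, mul_comm]
          congr 1
          conv_lhs => rw [← ENNReal.rpow_one 2, ← ENNReal.rpow_mul, one_mul]
          rw [← ENNReal.rpow_add_of_nonneg _ _ (by linarith) zero_le_one]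
          congr 1; ring
  refine tendsto_of_tendsto_of_tendsto_of_le_of_le tendsto_const_nhds ?_ (fun _ => zero_le) hb
  have h1 := (ENNReal.continuous_rpow_const (y := r - 1)).tendsto 0 |>.comp tendsto_inv_succ
  rw [ENNReal.zero_rpow_of_pos (by linarith)] at h1
  have := ENNReal.Tendsto.const_mul (a := (2 : ℝ≥0∞) ^ r) h1 (Or.inr (by simp))
  simpa using this

/-- The decay profile `(1 + |y|)^{-K}`. -/
def wK {n : ℕ} (K : ℕ) (y : Eu n) : ℝ≥0∞ := ENNReal.ofReal ((1 + ‖y‖) ^ K)⁻¹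

lemma norm_dil_le {m i l : ℕ} (hil : l ≤ i) (x : Eu (m + 1)) :
    ‖dil m i x‖ ≤ 2 ^ (i - l) * ‖dil m l x‖ := by
  refine (pi_norm_le_iff_of_nonneg (by positivity)).2 fun a => ?_
  refine le_trans ?_ (mul_le_mul_of_nonneg_left (norm_le_pi_norm (dil m l x) a) (by positivity))
  rw [dil_apply, dil_apply, norm_mul, norm_mul, ← mul_assoc]
  gcongr
  unfold dvec
  split_ifs
  · rw [norm_pow, norm_pow, Real.norm_ofNat, ← pow_add, Nat.sub_add_cancel hil]
  · rw [norm_one, mul_one]; exact one_le_pow₀ one_le_two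

lemma tw_add (s : ℝ) (j i : ℕ) :
    tw (s + j) i = tw s i * ENNReal.ofReal (((2 : ℝ) ^ i) ^ j) := by
  rw [tw, tw, ← ENNReal.ofReal_mul (by positivity), add_mul, Real.rpow_add two_pos]
  congr 2
  rw [← Nat.cast_mul, Real.rpow_natCast, ← pow_mul, mul_comm]

/-- Pointwise control of the weighted Littlewood–Paley pieces.  The `M = K + j + 1` powers of
`2^{-(i-l)}` in `SFi_Gil_le` pay for comparing the dilations of levels `l` and `i` (`K` powers),
for the weight `2^{ij}` against the normalisation `2^{-lj}` of the block (`j` powers), and leave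
one power for summation over `l`. -/
lemma piece_bound {m : ℕ} {Ψ : ℝ → ℝ} {Φn : ℕ → 𝓢(Eu (m + 1), ℂ)} {u : 𝓢(Eu m, ℂ)}
    {F : 𝓢(ℝ, ℂ)} (hm : 1 ≤ m) (hΨ : GoodPsi Ψ) (hΦn : IsLP Ψ Φn)
    (hF : ∀ σ, F σ ≠ 0 → 7 / 10 ≤ σ ∧ σ ≤ 1) (j K : ℕ) :
    ∃ C : ℝ, 0 ≤ C ∧ ∀ (s : ℝ) (k i : ℕ) (x : Eu (m + 1)),
      tw (s + j) i * (‖SFi _ (mulS (Φn i) (SF _ (Useq j u F k))) x‖₊ : ℝ≥0∞) ≤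
        (ENNReal.ofReal C * Ak k i) * (tw s i * wK K (dil m i x)) := by
  obtain ⟨C, hC, hCb⟩ := SFi_Gil_le (f := SF m u) hm hΨ hΦn hF (K + j + 1) K
  refine ⟨C, hC, fun s k i x => ?_⟩
  set P := tens (SF m u) F
  -- each block contributes `2^{-(i-l)}`, after trading powers of `2^{i-l}` for the rescaling
  have hterm : ∀ l ∈ Finset.Ico (k + 1) (2 * k + 2),
      ENNReal.ofReal (((2 : ℝ) ^ i) ^ j) * (‖(((2 : ℂ) ^ l) ^ j)⁻¹ *
        SFi _ (Gil (Φn i) P l) (dil m l x)‖₊ : ℝ≥0∞) ≤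
      ENNReal.ofReal C * eil i l * wK K (dil m i x) := by
    intro l hl
    rw [Finset.mem_Ico] at hl
    by_cases hil : l ≤ i
    · have e : eil i l = ENNReal.ofReal ((2 : ℝ) ^ (i - l))⁻¹ := by
        rw [eil, if_pos hil, ENNReal.ofReal_inv_of_pos (by positivity),
          ENNReal.ofReal_pow zero_le_two, ENNReal.ofReal_ofNat, ENNReal.inv_pow]
      rw [e, wK, ← ENNReal.ofReal_mul hC, ← ENNReal.ofReal_mul (by positivity),
        ← enorm_eq_nnnorm, ← ofReal_norm, ← ENNReal.ofReal_mul (by positivity)]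
      refine ENNReal.ofReal_le_ofReal ?_
      have h1 := hCb i l (by omega) hil (dil m l x)
      have h2 : ((1 + ‖dil m l x‖) ^ K)⁻¹ ≤ (2 ^ (i - l)) ^ K * ((1 + ‖dil m i x‖) ^ K)⁻¹ := by
        rw [inv_le_iff_one_le_mul₀ (by positivity), mul_comm, ← mul_assoc, ← div_eq_mul_inv,
          le_div_iff₀ (by positivity), one_mul, ← mul_pow]
        refine pow_le_pow_left₀ (by positivity) ?_ K
        have a := norm_dil_le hil x
        have b : (1 : ℝ) ≤ 2 ^ (i - l) := one_le_pow₀ one_le_two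
        nlinarith [norm_nonneg (dil m l x)]
      rw [norm_mul, norm_inv, norm_pow, norm_pow, Complex.norm_ofNat]
      have h3 : (2 : ℝ) ^ i = 2 ^ (i - l) * 2 ^ l := by rw [← pow_add, Nat.sub_add_cancel hil]
      calc ((2 : ℝ) ^ i) ^ j * ((((2 : ℝ) ^ l) ^ j)⁻¹ * ‖SFi _ (Gil (Φn i) P l) (dil m l x)‖)
          ≤ ((2 : ℝ) ^ i) ^ j * ((((2 : ℝ) ^ l) ^ j)⁻¹ * (C * ((2 ^ (i - l)) ^ (K + j + 1))⁻¹ *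
            ((2 ^ (i - l)) ^ K * ((1 + ‖dil m i x‖) ^ K)⁻¹))) := by
            gcongr
            exact h1.trans (mul_le_mul_of_nonneg_left h2 (by positivity))
        _ = C * (2 ^ (i - l))⁻¹ * ((1 + ‖dil m i x‖) ^ K)⁻¹ := by
            rw [h3, mul_pow, pow_succ, pow_add]
            field_simp
    · rw [Gil_eq_zero hΨ hΦn hF (not_le.1 hil), map_zero]
      simp
  rw [piece_Useq, tw_add]
  have hk : (‖((k : ℂ) + 1)⁻¹‖₊ : ℝ≥0∞) = ((k : ℝ≥0∞) + 1)⁻¹ := by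
    rw [nnnorm_inv, ENNReal.coe_inv (by rw [nnnorm_ne_zero_iff]; exact_mod_cast Nat.succ_ne_zero k)]
    congr 1
    have : ‖((k : ℂ) + 1)‖₊ = (k : ℝ≥0) + 1 := by
      rw [← Nat.cast_succ, Complex.nnnorm_natCast]; push_cast; rfl
    rw [this]; push_cast; rfl
  rw [nnnorm_mul, ENNReal.coe_mul, hk]
  have hsum : ENNReal.ofReal (((2 : ℝ) ^ i) ^ j) *
      (‖∑ l ∈ Finset.Ico (k + 1) (2 * k + 2), (((2 : ℂ) ^ l) ^ j)⁻¹ *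
        SFi _ (Gil (Φn i) P l) (dil m l x)‖₊ : ℝ≥0∞) ≤
      ENNReal.ofReal C * Dk k i * wK K (dil m i x) := by
    refine (mul_le_mul_right (ENNReal.coe_le_coe.2 (nnnorm_sum_le _ _)) _).trans ?_
    rw [ENNReal.ofNNReal_finsetSum, Finset.mul_sum, Dk, Finset.mul_sum, Finset.sum_mul]
    exact Finset.sum_le_sum hterm
  calc _ = tw s i * ((k : ℝ≥0∞) + 1)⁻¹ * (ENNReal.ofReal (((2 : ℝ) ^ i) ^ j) *
      (‖∑ l ∈ Finset.Ico (k + 1) (2 * k + 2), (((2 : ℂ) ^ l) ^ j)⁻¹ *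
        SFi _ (Gil (Φn i) P l) (dil m l x)‖₊ : ℝ≥0∞)) := by ring
    _ ≤ tw s i * ((k : ℝ≥0∞) + 1)⁻¹ * (ENNReal.ofReal C * Dk k i * wK K (dil m i x)) := by
      gcongr
    _ = _ := by unfold Ak; ring

/-! ### Weighted integrals and the Besov norm -/

/-- The weight `1 + |t|^{1/2} + |t|^{-1/2}`.  It is locally integrable, of at most linear growth,
and at least `2^{(|z|-1)/2}` for `|t| ∈ [2^z, 2^{z+1})`. -/
def Hw (t : ℝ) : ℝ≥0∞ :=
  ENNReal.ofReal (1 + |t| ^ (1 / 2 : ℝ) + |t| ^ (-(1 / 2) : ℝ))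

lemma measurable_Hw : Measurable Hw := by
  unfold Hw
  fun_prop

lemma one_le_Hw (t : ℝ) : 1 ≤ Hw t := by
  rw [Hw, ENNReal.one_le_ofReal]
  have := Real.rpow_nonneg (abs_nonneg t) (1 / 2)
  have := Real.rpow_nonneg (abs_nonneg t) (-(1 / 2))
  linarith

lemma Hw_ne_top (t : ℝ) : Hw t ≠ ⊤ := ENNReal.ofReal_ne_top

lemma integrableOn_abs_rpow :
    IntegrableOn (fun t : ℝ => |t| ^ (-(1 / 2) : ℝ)) (Set.Ioc (-1) 1) := by
  have h1 : IntervalIntegrable (fun t : ℝ => |t| ^ (-(1 / 2) : ℝ)) volume 0 1 := by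
    refine (intervalIntegral.intervalIntegrable_rpow' (a := 0) (b := 1)
      (r := -(1 / 2)) (by norm_num)).congr ?_
    intro t ht
    rw [Set.uIoc_of_le zero_le_one] at ht
    simp only [abs_of_pos ht.1]
  have h2 : IntervalIntegrable (fun t : ℝ => |t| ^ (-(1 / 2) : ℝ)) volume (-1) 0 := by
    have := (IntervalIntegrable.iff_comp_neg).1 h1
    simpa using this.symm
  exact (intervalIntegrable_iff_integrableOn_Ioc_of_le (by norm_num)).1 (h2.trans h1)

lemma lintegral_Hw_lt {L : ℝ} (hL : 3 ≤ L) :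
    ∫⁻ t : ℝ, ENNReal.ofReal ((1 + |t|) ^ (-L)) * Hw t < ⊤ := by
  have h1 : ∫⁻ t : ℝ, ENNReal.ofReal ((1 + ‖t‖) ^ (-(2 : ℝ))) < ⊤ :=
    finite_integral_one_add_norm (by simp)
  have h2 : ∫⁻ t in Set.Ioc (-1 : ℝ) 1, ENNReal.ofReal (|t| ^ (-(1 / 2) : ℝ)) < ⊤ := by
    exact integrableOn_abs_rpow.lintegral_lt_top
  rw [← lintegral_indicator measurableSet_Ioc] at h2
  have hb : ∀ t : ℝ, ENNReal.ofReal ((1 + |t|) ^ (-L)) * Hw t ≤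
      3 * ENNReal.ofReal ((1 + ‖t‖) ^ (-(2 : ℝ))) +
        (Set.Ioc (-1 : ℝ) 1).indicator (fun t => ENNReal.ofReal (|t| ^ (-(1 / 2) : ℝ))) t := by
    intro t
    have ha : 0 ≤ |t| := abs_nonneg t
    have hbase : (1 : ℝ) ≤ 1 + |t| := by linarith
    have e1 : (1 + |t|) ^ (-L) ≤ (1 + |t|) ^ (-(3 : ℝ)) :=
      Real.rpow_le_rpow_of_exponent_le hbase (by linarith)
    have e2 : (1 + |t|) ^ (-(3 : ℝ)) * (1 + |t|) = (1 + |t|) ^ (-(2 : ℝ)) := by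
      conv_lhs => rw [← Real.rpow_one (1 + |t|), ← Real.rpow_mul (by linarith), one_mul]
      rw [← Real.rpow_add (by linarith)]; norm_num
    have e3 : |t| ^ (1 / 2 : ℝ) ≤ 1 + |t| := by
      calc |t| ^ (1 / 2 : ℝ) ≤ (1 + |t|) ^ (1 / 2 : ℝ) := by gcongr; linarith
        _ ≤ (1 + |t|) ^ (1 : ℝ) := Real.rpow_le_rpow_of_exponent_le hbase (by norm_num)
        _ = _ := Real.rpow_one _
    have e0 : 0 ≤ (1 + |t|) ^ (-L) := by positivity
    have e4 : (1 + |t|) ^ (-L) ≤ 1 := Real.rpow_le_one_of_one_le_of_nonpos hbase (by linarith)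
    have e5 : 0 ≤ (1 + |t|) ^ (-(3 : ℝ)) := by positivity
    rw [Hw, ← ENNReal.ofReal_mul e0, Real.norm_eq_abs]
    by_cases ht : t ∈ Set.Ioc (-1 : ℝ) 1
    · rw [Set.indicator_of_mem ht]
      have e6 : 0 ≤ |t| ^ (-(1 / 2) : ℝ) := by positivity
      rw [← ENNReal.ofReal_ofNat 3, ← ENNReal.ofReal_mul (by norm_num),
        ← ENNReal.ofReal_add (by positivity) e6]
      refine ENNReal.ofReal_le_ofReal ?_
      rw [← e2]
      nlinarith [mul_le_mul e1 (by linarith : 1 + |t| ^ (1 / 2 : ℝ) ≤ 2 * (1 + |t|))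
        (by positivity) e5, mul_le_mul_of_nonneg_right e4 e6]
    · rw [Set.indicator_of_notMem ht, add_zero]
      have h1t : 1 ≤ |t| := by
        by_contra hc
        rw [not_le, abs_lt] at hc
        exact ht ⟨hc.1, hc.2.le⟩
      have e6 : |t| ^ (-(1 / 2) : ℝ) ≤ 1 := Real.rpow_le_one_of_one_le_of_nonpos h1t (by norm_num)
      rw [← ENNReal.ofReal_ofNat 3, ← ENNReal.ofReal_mul (by norm_num)]
      refine ENNReal.ofReal_le_ofReal ?_
      rw [← e2]
      have e7 : 0 ≤ |t| ^ (-(1 / 2) : ℝ) := by positivity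
      have e8 : 0 ≤ |t| ^ ((1 / 2) : ℝ) := by positivity
      nlinarith [mul_le_mul e1 (by linarith :
        1 + |t| ^ (1 / 2 : ℝ) + |t| ^ (-(1 / 2) : ℝ) ≤ 3 * (1 + |t|)) (by positivity) e5]
  refine (lintegral_mono hb).trans_lt ?_
  rw [lintegral_add_left (by fun_prop), lintegral_const_mul _ (by fun_prop)]
  exact ENNReal.add_lt_top.2 ⟨ENNReal.mul_lt_top (by simp) h1, h2⟩

lemma measurable_wK {n K : ℕ} : Measurable (wK K : Eu n → ℝ≥0∞) := by
  unfold wK; fun_prop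

/-- For `K` large, the weighted integral of the decay profile is finite. -/
lemma exists_K (m : ℕ) {r : ℝ} (hr : 0 < r) :
    ∃ K : ℕ, ∫⁻ y : Eu (m + 1), wK K y ^ r * Hw (y (Fin.last m)) ≠ ⊤ := by
  set L : ℝ := m + 3 with hLd
  obtain ⟨K, hK⟩ := exists_nat_gt (2 * L / r)
  rw [div_lt_iff₀ hr] at hK
  refine ⟨K, ne_of_lt ?_⟩
  have hL0 : 0 ≤ L := by positivity
  have hb : ∀ y : Eu (m + 1), wK K y ^ r * Hw (y (Fin.last m)) ≤
      (ENNReal.ofReal ((1 + |y (Fin.last m)|) ^ (-L)) * Hw (y (Fin.last m))) *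
        ENNReal.ofReal ((1 + ‖(Fin.init y : Eu m)‖) ^ (-L)) := by
    intro y
    rw [mul_right_comm]
    gcongr
    rw [wK, ENNReal.ofReal_rpow_of_nonneg (by positivity) hr.le,
      ← ENNReal.ofReal_mul (by positivity)]
    refine ENNReal.ofReal_le_ofReal ?_
    have h1 : (1 : ℝ) ≤ 1 + ‖y‖ := by linarith [norm_nonneg y]
    rw [← Real.rpow_natCast, ← Real.rpow_neg (by positivity), ← Real.rpow_mul (by positivity)]
    calc (1 + ‖y‖) ^ (-(K : ℝ) * r) ≤ (1 + ‖y‖) ^ (-L + -L) :=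
          Real.rpow_le_rpow_of_exponent_le h1 (by linarith)
      _ = (1 + ‖y‖) ^ (-L) * (1 + ‖y‖) ^ (-L) := Real.rpow_add (by positivity) _ _
      _ ≤ _ := by
        have a1 : |y (Fin.last m)| ≤ ‖y‖ := norm_le_pi_norm y _
        have a2 : ‖(Fin.init y : Eu m)‖ ≤ ‖y‖ := norm_init_le y
        gcongr ?_ * ?_
        · exact Real.rpow_le_rpow_of_nonpos (by positivity) (by linarith) (by linarith)
        · exact Real.rpow_le_rpow_of_nonpos (by positivity) (by linarith) (by linarith)
  refine (lintegral_mono hb).trans_lt ?_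
  have hv := (volume_preserving_piFinSuccAbove (fun _ : Fin (m + 1) => ℝ) (Fin.last m)).symm
  rw [← hv.lintegral_comp_emb (MeasurableEquiv.measurableEmbedding _)]
  have e : ∀ p : ℝ × Eu m,
      (MeasurableEquiv.piFinSuccAbove (fun _ : Fin (m + 1) => ℝ) (Fin.last m)).symm p
        = (Fin.snoc p.2 p.1 : Eu (m + 1)) := by
    rintro ⟨t, y⟩
    simp [MeasurableEquiv.piFinSuccAbove, Fin.insertNthEquiv]
  simp only [e, Fin.init_snoc, Fin.snoc_last]
  rw [Measure.volume_eq_prod, lintegral_prod_mul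
    (f := fun t : ℝ => ENNReal.ofReal ((1 + |t|) ^ (-L)) * Hw t)
    (g := fun y : Eu m => ENNReal.ofReal ((1 + ‖y‖) ^ (-L)))
    (by have := measurable_Hw; fun_prop) (by fun_prop)]
  refine ENNReal.mul_lt_top (lintegral_Hw_lt (by linarith [(Nat.cast_nonneg m : (0 : ℝ) ≤ m)])) ?_
  exact finite_integral_one_add_norm (by simp [hLd])

lemma tw_iv_rpow {p : ℝ≥0∞} (hp0 : 0 < p) (hp : p ≠ ⊤) (i : ℕ) :
    tw (iv p) i ^ p.toReal = ENNReal.ofReal (2 ^ i) := by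
  have h : 0 < p.toReal := ENNReal.toReal_pos hp0.ne' hp
  rw [tw, ENNReal.ofReal_rpow_of_nonneg (by positivity) h.le, ← Real.rpow_mul two_pos.le, iv,
    ENNReal.toReal_inv]
  have : p.toReal⁻¹ * i * p.toReal = i := by field_simp
  rw [this, Real.rpow_natCast]

/-- At the exponent `s = 1/p` the factor `2^{i/p}` cancels the Jacobian of the dilation, so the
weighted `L_p` norm of the `i`-th profile does not depend on `i`. -/
lemma lintegral_scaled {m : ℕ} {p : ℝ≥0∞} (hp0 : 0 < p) (hp : p ≠ ⊤) {a : ℝ≥0∞} (ha : a ≠ ⊤)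
    (K i : ℕ) (H : ℝ → ℝ≥0∞) :
    ∫⁻ x, (a * (tw (iv p) i * wK K (dil m i x))) ^ p.toReal * H (2 ^ i * x (Fin.last m)) =
      a ^ p.toReal * ∫⁻ y : Eu (m + 1), wK K y ^ p.toReal * H (y (Fin.last m)) := by
  have h : 0 < p.toReal := ENNReal.toReal_pos hp0.ne' hp
  have e : ∀ x : Eu (m + 1),
      (a * (tw (iv p) i * wK K (dil m i x))) ^ p.toReal * H (2 ^ i * x (Fin.last m)) =
      a ^ p.toReal * (ENNReal.ofReal (2 ^ i) * (wK K (dil m i x) ^ p.toReal *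
        H (dil m i x (Fin.last m)))) := by
    intro x
    rw [ENNReal.mul_rpow_of_nonneg _ _ h.le, ENNReal.mul_rpow_of_nonneg _ _ h.le,
      tw_iv_rpow hp0 hp, dil_last]
    ring
  simp only [e]
  rw [lintegral_const_mul' _ _ (ENNReal.rpow_ne_top_of_nonneg h.le ha),
    lintegral_const_mul' _ _ ENNReal.ofReal_ne_top,
    ← lintegral_dil (fun y => wK K y ^ p.toReal * H (y (Fin.last m)))]

/-- The functions `g k i` obey the pointwise bound of `piece_bound`: up to the coefficient
`A_{k,i}` they are dominated by the dilated decay profiles, for every order `K` of decay. -/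
def PieceBd {m : ℕ} (j : ℕ) (g : ℕ → ℕ → Eu (m + 1) → ℂ) : Prop :=
  ∀ K : ℕ, ∃ C : ℝ, 0 ≤ C ∧ ∀ (s : ℝ) (k i : ℕ) (x : Eu (m + 1)),
      tw (s + j) i * (‖g k i x‖₊ : ℝ≥0∞) ≤
        (ENNReal.ofReal C * Ak k i) * (tw s i * wK K (dil m i x))

/-- The Besov norm is dominated by the `ℓ_q` norm of `i ↦ A_{k,i}`. -/
lemma besov_tendsto {m j : ℕ} {g : ℕ → ℕ → Eu (m + 1) → ℂ} (hg : PieceBd j g)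
    {p q : ℝ≥0∞} (hp0 : 0 < p) (hp : p ≠ ⊤) (hq : 1 < q) :
    Tendsto (fun k => besovNormSeq (iv p + (j : ℝ)) p q (g k)) atTop (𝓝 0) := by
  have h : 0 < p.toReal := ENNReal.toReal_pos hp0.ne' hp
  obtain ⟨K, hK⟩ := exists_K m h
  obtain ⟨C, hC, hb⟩ := hg K
  set J := ∫⁻ y : Eu (m + 1), wK K y ^ p.toReal * Hw (y (Fin.last m)) with hJ
  set B : ℝ≥0∞ := ENNReal.ofReal C * J ^ (1 / p.toReal) with hB
  have hBt : B ≠ ⊤ := ENNReal.mul_ne_top ENNReal.ofReal_ne_top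
    (ENNReal.rpow_ne_top_of_nonneg (by positivity) hK)
  have hmain : ∀ k i, tw (iv p + j) i * eLpNorm (g k i) p volume ≤ B * Ak k i := by
    intro k i
    have hat : ENNReal.ofReal C * Ak k i ≠ ⊤ :=
      ENNReal.mul_ne_top ENNReal.ofReal_ne_top (Ak_ne_top k i)
    have htw : tw (iv p + j) i ≠ ⊤ := ENNReal.ofReal_ne_top
    rw [eLpNorm_eq_lintegral_rpow_enorm_toReal hp0.ne' hp]
    have h1 : tw (iv p + j) i = (tw (iv p + j) i ^ p.toReal) ^ (1 / p.toReal) := by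
      rw [← ENNReal.rpow_mul, mul_one_div_cancel h.ne', ENNReal.rpow_one]
    rw [h1, ← ENNReal.mul_rpow_of_nonneg _ _ (by positivity),
      ← lintegral_const_mul' _ _ (ENNReal.rpow_ne_top_of_nonneg h.le htw)]
    have h2 : ∫⁻ x, tw (iv p + j) i ^ p.toReal * ‖g k i x‖ₑ ^ p.toReal ≤
        (ENNReal.ofReal C * Ak k i) ^ p.toReal * J := by
      rw [hJ, ← lintegral_scaled hp0 hp hat K i]
      refine lintegral_mono fun x => ?_
      rw [← ENNReal.mul_rpow_of_nonneg _ _ h.le]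
      refine le_trans ?_ (le_mul_of_one_le_right zero_le (one_le_Hw _))
      exact ENNReal.rpow_le_rpow (hb (iv p) k i x) h.le
    calc _ ≤ ((ENNReal.ofReal C * Ak k i) ^ p.toReal * J) ^ (1 / p.toReal) := by gcongr
      _ = _ := by
        rw [ENNReal.mul_rpow_of_nonneg _ _ (by positivity), ← ENNReal.rpow_mul,
          mul_one_div_cancel h.ne', ENNReal.rpow_one, hB]
        ring
  by_cases hqt : q = ⊤
  · subst hqt
    have hb2 : ∀ k, besovNormSeq (iv p + (j : ℝ)) p ⊤ (g k) ≤
        B * (((k : ℝ≥0∞) + 1)⁻¹ * 2) := by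
      intro k
      rw [besovNormSeq, ellqNorm, if_pos rfl]
      refine iSup_le fun i => (hmain k i).trans ?_
      gcongr
      exact Ak_le k i
    refine tendsto_of_tendsto_of_tendsto_of_le_of_le tendsto_const_nhds ?_ (fun _ => zero_le) hb2
    have h1 := ENNReal.Tendsto.mul_const (b := 2) tendsto_inv_succ (Or.inr (by simp))
    have h2 := ENNReal.Tendsto.const_mul (a := B) h1 (Or.inr hBt)
    simpa using h2
  · have hr : 1 < q.toReal := by
      rw [← ENNReal.toReal_one]; exact (ENNReal.toReal_lt_toReal (by simp) hqt).2 hq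
    have hr0 : 0 < q.toReal := by linarith
    have hb2 : ∀ k, besovNormSeq (iv p + (j : ℝ)) p q (g k) ≤
        B * (∑' i, Ak k i ^ q.toReal) ^ (1 / q.toReal) := by
      intro k
      rw [besovNormSeq, ellqNorm, if_neg hqt]
      have e : B = (B ^ q.toReal) ^ (1 / q.toReal) := by
        rw [← ENNReal.rpow_mul, mul_one_div_cancel hr0.ne', ENNReal.rpow_one]
      rw [e, ← ENNReal.mul_rpow_of_nonneg _ _ (by positivity), ← ENNReal.tsum_mul_left]
      gcongr with i
      rw [← ENNReal.mul_rpow_of_nonneg _ _ hr0.le]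
      exact ENNReal.rpow_le_rpow (hmain k i) hr0.le
    refine tendsto_of_tendsto_of_tendsto_of_le_of_le tendsto_const_nhds ?_ (fun _ => zero_le) hb2
    have h1 := (ENNReal.continuous_rpow_const (y := 1 / q.toReal)).tendsto 0 |>.comp
      (tendsto_tsum_Ak hr)
    rw [ENNReal.zero_rpow_of_pos (by positivity)] at h1
    have h2 := ENNReal.Tendsto.const_mul (a := B) h1 (Or.inr hBt)
    simpa using h2

/-! ### The Triebel–Lizorkin norm -/

lemma Hw_lower {t : ℝ} {z : ℤ} (h1 : (2 : ℝ) ^ z ≤ |t|) (h2 : |t| < (2 : ℝ) ^ (z + 1)) :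
    ENNReal.ofReal ((2 : ℝ) ^ (((z.natAbs : ℝ) - 1) / 2)) ≤ Hw t := by
  refine ENNReal.ofReal_le_ofReal ?_
  have hz : (0 : ℝ) < 2 ^ z := by positivity
  have ht : 0 < |t| := hz.trans_le h1
  have p1 : 0 ≤ |t| ^ (1 / 2 : ℝ) := by positivity
  have p2 : 0 ≤ |t| ^ (-(1 / 2) : ℝ) := by positivity
  rcases le_or_gt 0 z with h | h
  · have e : (z.natAbs : ℝ) = z := by
      rw [Nat.cast_natAbs, abs_of_nonneg h]
    have : (2 : ℝ) ^ (((z.natAbs : ℝ) - 1) / 2) ≤ |t| ^ (1 / 2 : ℝ) := by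
      calc (2 : ℝ) ^ (((z.natAbs : ℝ) - 1) / 2) ≤ 2 ^ ((z : ℝ) * (1 / 2)) :=
            Real.rpow_le_rpow_of_exponent_le one_le_two (by rw [e]; linarith)
        _ = ((2 : ℝ) ^ z) ^ (1 / 2 : ℝ) := by
            rw [Real.rpow_mul two_pos.le, Real.rpow_intCast]
        _ ≤ _ := by gcongr
    linarith
  · have e : (z.natAbs : ℝ) = -z := by
      rw [Nat.cast_natAbs, abs_of_neg h]; push_cast; rfl
    have : (2 : ℝ) ^ (((z.natAbs : ℝ) - 1) / 2) ≤ |t| ^ (-(1 / 2) : ℝ) := by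
      calc (2 : ℝ) ^ (((z.natAbs : ℝ) - 1) / 2) = 2 ^ (((z + 1 : ℤ) : ℝ) * (-(1 / 2))) := by
            rw [e]; push_cast; congr 1; ring
        _ = ((2 : ℝ) ^ (z + 1)) ^ (-(1 / 2) : ℝ) := by
            rw [Real.rpow_mul two_pos.le, Real.rpow_intCast]
        _ ≤ _ := Real.rpow_le_rpow_of_nonpos ht h2.le (by norm_num)
    linarith

/-- The weights `Hw (2^i t)` grow geometrically away from the level `2^i |t| ≈ 1`, so their
negative powers are summable over `i`, uniformly in `t ≠ 0`. -/
lemma exists_Gam {β : ℝ} (hβ : 0 < β) :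
    ∃ Γ : ℝ≥0∞, Γ ≠ ⊤ ∧ ∀ t : ℝ, t ≠ 0 → ∑' i : ℕ, Hw (2 ^ i * t) ^ (-β) ≤ Γ := by
  set ρ : ℝ := 2 ^ (-(β / 2)) with hρ
  have hρ0 : 0 ≤ ρ := by positivity
  have hρ1 : ρ < 1 := Real.rpow_lt_one_of_one_lt_of_neg one_lt_two (by linarith)
  set G : ℤ → ℝ≥0∞ := fun z => ENNReal.ofReal (2 ^ (β / 2) * ρ ^ z.natAbs) with hG
  refine ⟨∑' z, G z, ?_, fun t ht => ?_⟩
  · refine Summable.tsum_ofReal_ne_top (Summable.mul_left _ ?_)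
    rw [summable_int_iff_summable_nat_and_neg]
    simpa using summable_geometric_of_lt_one hρ0 hρ1
  · obtain ⟨n, hn1, hn2⟩ := exists_mem_Ico_zpow (abs_pos.2 ht) (one_lt_two (α := ℝ))
    have hinj : Function.Injective (fun i : ℕ => (i : ℤ) + n) := fun a b h => by
      simpa using h
    refine le_trans (ENNReal.tsum_le_tsum fun i => ?_)
      (ENNReal.tsum_comp_le_tsum_of_injective hinj G)
    have hi : |2 ^ i * t| = 2 ^ i * |t| := by rw [abs_mul, abs_of_pos (by positivity)]
    have h1 : (2 : ℝ) ^ ((i : ℤ) + n) ≤ |2 ^ i * t| := by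
      rw [hi, zpow_add₀ two_ne_zero, zpow_natCast]; gcongr
    have h2 : |2 ^ i * t| < (2 : ℝ) ^ ((i : ℤ) + n + 1) := by
      rw [hi, add_assoc, zpow_add₀ two_ne_zero, zpow_natCast]; gcongr
    have h3 := Hw_lower h1 h2
    set z := (i : ℤ) + n
    calc Hw (2 ^ i * t) ^ (-β) ≤ ENNReal.ofReal ((2 : ℝ) ^ (((z.natAbs : ℝ) - 1) / 2)) ^ (-β) :=
          by
            rw [ENNReal.rpow_neg, ENNReal.rpow_neg, ENNReal.inv_le_inv]
            exact ENNReal.rpow_le_rpow h3 hβ.le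
      _ = G z := by
          rw [ENNReal.ofReal_rpow_of_pos (by positivity), ← Real.rpow_mul two_pos.le, hG]
          simp only
          rw [hρ, ← Real.rpow_natCast, ← Real.rpow_mul two_pos.le, ← Real.rpow_add two_pos]
          congr 2
          ring

/-- A weighted `ℓ_r` norm dominates the `ℓ_q` norm for every `q > 0`: write
`b_i^q = Hw(2^i t)^{-q/r} (b_i^r Hw(2^i t))^{q/r}`, bound the second factor by the sum over all
indices, and sum the first one with `exists_Gam`. -/
lemma exists_ellq_le {r : ℝ} (hr : 0 < r) {q : ℝ≥0∞} (hq : 0 < q) :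
    ∃ Γ : ℝ≥0∞, Γ ≠ ⊤ ∧ ∀ t : ℝ, t ≠ 0 → ∀ b : ℕ → ℝ≥0∞,
      ellqNorm q b ^ r ≤ Γ * ∑' i, b i ^ r * Hw (2 ^ i * t) := by
  by_cases hqt : q = ⊤
  · subst hqt
    refine ⟨1, by simp, fun t _ b => ?_⟩
    rw [one_mul, ellqNorm, if_pos rfl]
    set S := ∑' i, b i ^ r * Hw (2 ^ i * t)
    have : ⨆ i, b i ≤ S ^ (1 / r) := by
      refine iSup_le fun i => ?_
      have h1 : b i ^ r ≤ S :=
        (le_mul_of_one_le_right zero_le (one_le_Hw _)).trans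
          (ENNReal.le_tsum (f := fun i => b i ^ r * Hw (2 ^ i * t)) i)
      rw [one_div]
      exact (ENNReal.le_rpow_inv_iff hr).2 h1
    calc (⨆ i, b i) ^ r ≤ (S ^ (1 / r)) ^ r := ENNReal.rpow_le_rpow this hr.le
      _ = S := by rw [← ENNReal.rpow_mul, one_div_mul_cancel hr.ne', ENNReal.rpow_one]
  · have hq0 : 0 < q.toReal := ENNReal.toReal_pos hq.ne' hqt
    set ρ := q.toReal
    obtain ⟨Γ, hΓ, hb⟩ := exists_Gam (div_pos hq0 hr)
    refine ⟨Γ ^ (1 / ρ * r), ENNReal.rpow_ne_top_of_nonneg (by positivity) hΓ,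
      fun t ht b => ?_⟩
    rw [ellqNorm, if_neg hqt, ← ENNReal.rpow_mul]
    set S := ∑' i, b i ^ r * Hw (2 ^ i * t) with hS
    have h1 : ∑' i, b i ^ ρ ≤ Γ * S ^ (ρ / r) := by
      calc ∑' i, b i ^ ρ ≤ ∑' i, Hw (2 ^ i * t) ^ (-(ρ / r)) * S ^ (ρ / r) := by
            refine ENNReal.tsum_le_tsum fun i => ?_
            have h0 : Hw (2 ^ i * t) ≠ 0 :=
              (zero_lt_one.trans_le (one_le_Hw _)).ne'
            have e : b i ^ ρ =
                Hw (2 ^ i * t) ^ (-(ρ / r)) * (b i ^ r * Hw (2 ^ i * t)) ^ (ρ / r) := by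
              rw [ENNReal.mul_rpow_of_nonneg _ _ (by positivity), ← ENNReal.rpow_mul,
                mul_div_cancel₀ _ hr.ne', mul_left_comm,
                ← ENNReal.rpow_add _ _ h0 (Hw_ne_top _), neg_add_cancel, ENNReal.rpow_zero,
                mul_one]
            rw [e]
            exact mul_le_mul_right (ENNReal.rpow_le_rpow
              (ENNReal.le_tsum (f := fun i => b i ^ r * Hw (2 ^ i * t)) i) (by positivity)) _
        _ = (∑' i, Hw (2 ^ i * t) ^ (-(ρ / r))) * S ^ (ρ / r) := ENNReal.tsum_mul_right
        _ ≤ _ := mul_le_mul_left (hb t ht) _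
    calc (∑' i, b i ^ ρ) ^ (1 / ρ * r) ≤ (Γ * S ^ (ρ / r)) ^ (1 / ρ * r) :=
          ENNReal.rpow_le_rpow h1 (by positivity)
      _ = _ := by
        rw [ENNReal.mul_rpow_of_nonneg _ _ (by positivity), ← ENNReal.rpow_mul]
        have : ρ / r * (1 / ρ * r) = 1 := by field_simp
        rw [this, ENNReal.rpow_one]

lemma ellqNorm_mono {q : ℝ≥0∞} {b c : ℕ → ℝ≥0∞} (h : ∀ i, b i ≤ c i) :
    ellqNorm q b ≤ ellqNorm q c := by
  unfold ellqNorm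
  split_ifs
  · exact iSup_mono h
  · refine ENNReal.rpow_le_rpow (ENNReal.tsum_le_tsum fun i => ?_) (by positivity)
    exact ENNReal.rpow_le_rpow (h i) ENNReal.toReal_nonneg

/-- The Triebel–Lizorkin norm is dominated by the `ℓ_p` norm of `i ↦ A_{k,i}`, whatever `q`. -/
lemma tl_tendsto {m j : ℕ} {g : ℕ → ℕ → Eu (m + 1) → ℂ} (hg : PieceBd j g)
    {p q : ℝ≥0∞} (hp1 : 1 < p) (hp : p ≠ ⊤) (hq : 0 < q) :
    Tendsto (fun k => tlNormSeq (iv p + (j : ℝ)) p q (g k)) atTop (𝓝 0) := by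
  have hp0 : 0 < p := zero_lt_one.trans hp1
  have hr1 : 1 < p.toReal := by
    rw [← ENNReal.toReal_one]; exact (ENNReal.toReal_lt_toReal (by simp) hp).2 hp1
  have h : 0 < p.toReal := by linarith
  obtain ⟨K, hK⟩ := exists_K m h
  obtain ⟨C, hC, hb⟩ := hg K
  obtain ⟨Γ, hΓ, hell⟩ := exists_ellq_le h hq
  set J := ∫⁻ y : Eu (m + 1), wK K y ^ p.toReal * Hw (y (Fin.last m)) with hJ
  set D : ℝ≥0∞ := Γ * (ENNReal.ofReal C ^ p.toReal * J) with hD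
  have hDt : D ≠ ⊤ := ENNReal.mul_ne_top hΓ (ENNReal.mul_ne_top
    (ENNReal.rpow_ne_top_of_nonneg h.le ENNReal.ofReal_ne_top) hK)
  have hne : ∀ᵐ x : Eu (m + 1), x (Fin.last m) ≠ 0 :=
    Measure.ae_eval_ne (fun _ : Fin (m + 1) => (volume : Measure ℝ)) (Fin.last m) 0
  have hmain : ∀ k, tlNormSeq (iv p + (j : ℝ)) p q (g k) ≤
      (D * ∑' i, Ak k i ^ p.toReal) ^ (1 / p.toReal) := by
    intro k
    refine ENNReal.rpow_le_rpow ?_ (by positivity)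
    set B : ℕ → Eu (m + 1) → ℝ≥0∞ := fun i x =>
      (ENNReal.ofReal C * Ak k i) * (tw (iv p) i * wK K (dil m i x)) with hB
    have hat : ∀ i, ENNReal.ofReal C * Ak k i ≠ ⊤ := fun i =>
      ENNReal.mul_ne_top ENNReal.ofReal_ne_top (Ak_ne_top k i)
    calc _ ≤ ∫⁻ x : Eu (m + 1),
          Γ * ∑' i, B i x ^ p.toReal * Hw (2 ^ i * x (Fin.last m)) := by
          refine lintegral_mono_ae ?_
          filter_upwards [hne] with x hx
          refine le_trans (ENNReal.rpow_le_rpow (ellqNorm_mono fun i => hb (iv p) k i x) h.le) ?_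
          exact hell _ hx fun i => B i x
      _ = Γ * ∑' i, ∫⁻ x : Eu (m + 1), B i x ^ p.toReal * Hw (2 ^ i * x (Fin.last m)) := by
          rw [lintegral_const_mul' _ _ hΓ, lintegral_tsum]
          intro i
          have m1 := measurable_Hw
          have m2 := measurable_wK (n := m + 1) (K := K)
          have m3 : Measurable (fun x : Eu (m + 1) => dil m i x) :=
            (dil m i).continuous.measurable
          fun_prop
      _ = Γ * ∑' i, (ENNReal.ofReal C ^ p.toReal * J) * Ak k i ^ p.toReal := by
          congr 1
          refine tsum_congr fun i => ?_
          rw [hB, lintegral_scaled hp0 hp (hat i), ENNReal.mul_rpow_of_nonneg _ _ h.le]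
          ring
      _ = _ := by rw [ENNReal.tsum_mul_left, hD]; ring
  refine tendsto_of_tendsto_of_tendsto_of_le_of_le tendsto_const_nhds ?_ (fun _ => zero_le) hmain
  have h1 := ENNReal.Tendsto.const_mul (a := D) (tendsto_tsum_Ak hr1) (Or.inr hDt)
  rw [mul_zero] at h1
  have h2 := (ENNReal.continuous_rpow_const (y := 1 / p.toReal)).tendsto 0 |>.comp h1
  rw [ENNReal.zero_rpow_of_pos (by positivity)] at h2
  exact h2

end construction

/-- Counterexample sequence for the trace at the borderline `s = 1/p + j`. -/
theorem statement_6 (m : ℕ) (hm : 1 ≤ m) (Ψ : ℝ → ℝ) (hΨ : GoodPsi Ψ)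
    (Φn : ℕ → SchwartzMap (Eu (m + 1)) ℂ) (hΦn : IsLP Ψ Φn)
    (j : ℕ) (u : SchwartzMap (Eu m) ℂ) (hu : u ≠ 0) :
    ∃ U : ℕ → SchwartzMap (Eu (m + 1)) ℂ,
      (∀ (k : ℕ) (x' : Eu m), traceJ j (fun x => U k x) x' = u x') ∧
      (∀ p q : ℝ≥0∞, 0 < p → p ≠ ∞ → 1 < q →
        ∀ T : ℕ → TD (m + 1), (∀ k, Represents (T k) (fun x => U k x)) →
          Tendsto (fun k => besovNormD Φn (iv p + (j : ℝ)) p q (T k)) atTop (𝓝 0)) ∧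
      (∀ p q : ℝ≥0∞, 1 < p → p ≠ ∞ → 0 < q →
        ∀ T : ℕ → TD (m + 1), (∀ k, Represents (T k) (fun x => U k x)) →
          Tendsto (fun k => tlNormD Φn (iv p + (j : ℝ)) p q (T k)) atTop (𝓝 0)) := by
  obtain ⟨F, hF, hFs, hF1⟩ := exists_profile j
  have hg : PieceBd j fun k i x =>
      SFi _ (mulS (Φn i) (SF _ (Useq j u F k))) x :=
    fun K => piece_bound hm hΨ hΦn hF j K
  refine ⟨Useq j u F, traceJ_Useq j u F hFs hF1, ?_, ?_⟩
  · intro p q hp0 hp hq T hT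
    simp only [besovNormD, LPfun_eq _ _ _ (hT _)]
    exact besov_tendsto hg hp0 hp hq
  · intro p q hp1 hp hq T hT
    simp only [tlNormD, LPfun_eq _ _ _ (hT _)]
    exact tl_tendsto hg hp1 hp hq

end
end

section
/- Let n ≥ 2, j ∈ ℕ₀ and z′ ∈ ℝ^{n−1}. Then there exists a sequence (v_k)_{k∈ℕ} in 𝒮(ℝⁿ) such that ((−i∂_{x_n})^j v_k)(·,0) → δ_{z′} in 𝒮′(ℝ^{n−1}) as k → ∞ (i.e. ∫_{ℝ^{n−1}} ((−i∂_{x_n})^j v_k)(x′,0) ψ(x′) dx′ → ψ(z′) for every ψ ∈ 𝒮(ℝ^{n−1})), while for every p ∈ (0,1] and q ∈ (1,∞]: ‖v_k‖_{B^{n/p−(n−1)+j}_{p,q}(ℝⁿ)} → 0 as k → ∞. -/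
/-!
Let `n = m + 1`. The sequence is built from one band-limited function `η` with
`supp ℱη ⊆ {13/20 ≤ |ξ| ≤ 11/10}` and `∫ (D_n^j η)(x', 0) dx' = 1`. Put `z = (z', 0)` and
`w_l(x) = 2^{l(m-j)} η(2^l (x - z))`.

* The trace of `D_n^j w_l` is `2^{lm} K(2^l (x' - z'))` with `∫ K = 1`, an approximate identity, so it
  converges to `δ_{z'}` (`tendsto_approx_identity`).
* Since `Φ_l = 1` on the support of `ℱw_l` and the other `Φ_i` vanish there (`LPsym_annulus`), `w_l` is
  its own only Littlewood–Paley piece. The exponent `s = n/p - m + j` makes `2^{sl} ‖w_l‖_p = ‖η‖_p`.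

Hence `v_k = k⁻¹ ∑_{l<k} w_l` has traces converging to `δ_{z'}` (Cesàro means), while its Besov norm is
the `ℓ_q` norm of `k` copies of `‖η‖_p / k`, that is `k^{1/q - 1} ‖η‖_p → 0` because `q > 1`
(`tendsto_ellqNorm`).

Take for `η` a tensor product `∏_{i<m} A(x_i) · B(x_n)`, with `ℱA` a bump near `0` and `ℱB` a bump
in `[0.8, 1]`. Then every Fourier integral factors into one-dimensional ones; the normalization needs
only `∫ A = ℱA(0) = 1` and `(D^j B)(0) = 1`, the latter being a moment of a positive bump.
-/

open MeasureTheory Filter Complex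
open scoped ENNReal NNReal Real BigOperators Topology

noncomputable section

/-! ### The Fourier transform on `Fin m → ℝ` and Littlewood–Paley pieces -/

/-- The inverse Fourier transform on `Fin m → ℝ` in terms of Mathlib's one on `EuclideanSpace`, whose
character carries a factor `2π`. -/
lemma pFinv_transport {m : ℕ} (h : Eu m → ℂ) (x : Eu m) :
    pFinv h x = (((2 * Real.pi) ^ m : ℝ)⁻¹) •
      FourierTransform.fourierInv (fun v : EuclideanSpace ℝ (Fin m) => h v.ofLp)
        (WithLp.toLp 2 ((2 * Real.pi)⁻¹ • x)) := by
  have hpi : (Real.pi : ℂ) ≠ 0 := by exact_mod_cast Real.pi_ne_zero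
  rw [pFinv, Real.fourierInv_eq', ← (PiLp.volume_preserving_toLp (Fin m)).integral_comp
    (MeasurableEquiv.toLp 2 (Fin m → ℝ)).measurableEmbedding]
  congr 2
  funext ξ
  simp only [smul_eq_mul]
  congr 2
  simp only [dotp, PiLp.inner_apply, RCLike.inner_apply, conj_trivial, Pi.smul_apply, smul_eq_mul]
  push_cast
  rw [Finset.mul_sum, Finset.mul_sum, Finset.sum_mul]
  refine Finset.sum_congr rfl fun i _ => ?_
  field_simp

lemma pF_eq_pFinv {m : ℕ} (f : Eu m → ℂ) (ξ : Eu m) :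
    pF f ξ = (((2 * Real.pi) ^ m : ℝ)) • pFinv f (-ξ) := by
  have : ((2 * Real.pi) ^ m : ℝ) ≠ 0 := by positivity
  rw [pFinv, smul_smul, mul_inv_cancel₀ this, one_smul, pF]
  congr 1
  funext x
  congr 2
  simp [dotp, mul_comm]

lemma pF_transport {m : ℕ} (h : Eu m → ℂ) (x : Eu m) :
    pF h x =
      FourierTransform.fourier (fun v : EuclideanSpace ℝ (Fin m) => h v.ofLp)
        (WithLp.toLp 2 ((2 * Real.pi)⁻¹ • x)) := by
  have : ((2 * Real.pi) ^ m : ℝ) ≠ 0 := by positivity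
  rw [pF_eq_pFinv, pFinv_transport, smul_smul, mul_inv_cancel₀ this, one_smul,
    Real.fourierInv_eq_fourier_neg]
  rw [← WithLp.toLp_neg, smul_neg, neg_neg]

/-- The inverse Fourier transform of a Schwartz function is a Schwartz function. -/
lemma exists_pFinv_schwartz {m : ℕ} (h : SchwartzMap (Eu m) ℂ) :
    ∃ S : SchwartzMap (Eu m) ℂ, ∀ x, S x = pFinv (fun y => h y) x := by
  let e := EuclideanSpace.equiv (Fin m) ℝ
  let u : ℝˣ := Units.mk0 ((2 * Real.pi)⁻¹) (by positivity)
  let h1 : SchwartzMap (EuclideanSpace ℝ (Fin m)) ℂ :=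
    SchwartzMap.compCLMOfContinuousLinearEquiv ℂ e h
  let g : Eu m ≃L[ℝ] EuclideanSpace ℝ (Fin m) :=
    (ContinuousLinearEquiv.smulLeft u).trans e.symm
  refine ⟨(((2 * Real.pi) ^ m : ℝ)⁻¹) • SchwartzMap.compCLMOfContinuousLinearEquiv ℂ g
    (FourierTransform.fourierInv h1), fun x => ?_⟩
  rw [pFinv_transport, smul_apply,
    SchwartzMap.compCLMOfContinuousLinearEquiv_apply, Function.comp_apply,
    SchwartzMap.fourierInv_coe]
  rfl

lemma exists_pF_schwartz {m : ℕ} (h : SchwartzMap (Eu m) ℂ) :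
    ∃ S : SchwartzMap (Eu m) ℂ, ∀ x, S x = pF (fun y => h y) x := by
  obtain ⟨S, hS⟩ := exists_pFinv_schwartz h
  refine ⟨(((2 * Real.pi) ^ m : ℝ)) • SchwartzMap.compCLMOfContinuousLinearEquiv ℂ
    (ContinuousLinearEquiv.neg ℝ) S, fun x => ?_⟩
  rw [pF_eq_pFinv, ← hS]
  rfl

lemma pFinv_pF {m : ℕ} (f : SchwartzMap (Eu m) ℂ) (x : Eu m) :
    pFinv (pF (fun y => f y)) x = f x := by
  let F : SchwartzMap (EuclideanSpace ℝ (Fin m)) ℂ :=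
    SchwartzMap.compCLMOfContinuousLinearEquiv ℂ (EuclideanSpace.equiv (Fin m) ℝ) f
  have hF : ∀ v, F v = f v.ofLp := fun v => rfl
  have hpi : (Real.pi : ℂ) ≠ 0 := by exact_mod_cast Real.pi_ne_zero
  have h2 : ((2 * Real.pi) ^ m : ℝ) ≠ 0 := by positivity
  have key := congrArg (fun g : SchwartzMap (EuclideanSpace ℝ (Fin m)) ℂ => g (WithLp.toLp 2 x))
    (FourierTransform.fourierInv_fourier_eq
      (E := SchwartzMap (EuclideanSpace ℝ (Fin m)) ℂ)
      (F := SchwartzMap (EuclideanSpace ℝ (Fin m)) ℂ) F)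
  simp only [hF, SchwartzMap.fourierInv_coe, SchwartzMap.fourier_coe] at key
  rw [← key, pFinv_transport, Real.fourierInv_eq', Real.fourierInv_eq']
  have := Measure.integral_comp_smul (volume : Measure (EuclideanSpace ℝ (Fin m)))
    (fun v => cexp (((2 * Real.pi * inner ℝ v (WithLp.toLp 2 x) : ℝ) : ℂ) * I) •
      FourierTransform.fourier (F : EuclideanSpace ℝ (Fin m) → ℂ) v) ((2 * Real.pi)⁻¹)
  rw [finrank_euclideanSpace, Fintype.card_fin, abs_of_nonneg (by positivity), inv_pow, inv_inv]
    at this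
  -- The substitution `ξ = 2π v` in the outer integral cancels the prefactor `(2π)^{-m}`.
  rw [inv_smul_eq_iff₀ h2, ← this]
  congr 1
  funext v
  rw [pF_transport]
  congr 2
  rw [WithLp.toLp_smul, real_inner_smul_left, real_inner_smul_right]

/-- Symmetry of the inverse Fourier transform: `∫ (ℱ⁻¹a) b = ∫ a (ℱ⁻¹b)` (Fubini). -/
lemma integral_pFinv_mul {m : ℕ} {a b : Eu m → ℂ} (ha : Integrable a) (hb : Integrable b) :
    ∫ x, pFinv a x * b x = ∫ x, a x * pFinv b x := by
  have hI : Integrable (fun z : Eu m × Eu m =>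
      cexp (I * (dotp z.1 z.2 : ℂ)) * (b z.1 * a z.2)) (volume.prod volume) := by
    refine (hb.mul_prod ha).bdd_mul (c := 1) ?_ ?_
    · refine Continuous.aestronglyMeasurable ?_
      unfold dotp
      fun_prop
    · refine Eventually.of_forall fun z => ?_
      rw [mul_comm, Complex.norm_exp_ofReal_mul_I]
  have hs := integral_integral_swap (f := fun x ξ => cexp (I * (dotp x ξ : ℂ)) * (b x * a ξ)) hI
  simp only [pFinv]
  calc _ = (((2 * Real.pi) ^ m : ℝ)⁻¹) •
        ∫ x, ∫ ξ, cexp (I * (dotp x ξ : ℂ)) * (b x * a ξ) := by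
        rw [← integral_smul]
        congr 1; funext x
        rw [smul_mul_assoc, ← integral_mul_const]
        congr 2; funext ξ; ring
    _ = _ := by
        rw [hs, ← integral_smul]
        congr 1; funext x
        rw [mul_smul_comm, ← integral_const_mul]
        congr 2; funext ξ
        rw [show dotp ξ x = dotp x ξ by simp [dotp, mul_comm]]
        ring

/-- If `u` is represented by `F = ℱ⁻¹H`, then `G = ℱ⁻¹(Φ H)` is its Littlewood–Paley piece. With
`χ = ℱ(Φ ℱ⁻¹φ)`, both pairings `∫ F χ` and `∫ G φ` equal `∫ Φ H ℱ⁻¹φ`, by symmetry and inversion. -/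
lemma isLPpiece_of_represents {m : ℕ} (Φ H F G : SchwartzMap (Eu m) ℂ) (T : TD m)
    (hT : Represents T (fun x => F x)) (hF : ∀ x, F x = pFinv (fun y => H y) x)
    (hG : ∀ x, G x = pFinv (fun y => Φ y * H y) x) :
    IsLPpiece Φ T (fun x => G x) := by
  refine ⟨G.continuous, fun φ ψ χ hψ hχ => ?_⟩
  have mulS : ∀ f : SchwartzMap (Eu m) ℂ, ∃ g : SchwartzMap (Eu m) ℂ, ∀ x, g x = Φ x * f x :=
    fun f => ⟨SchwartzMap.smulLeftCLM ℂ (Φ : Eu m → ℂ) f, fun x => by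
      rw [SchwartzMap.smulLeftCLM_apply_apply Φ.hasTemperateGrowth, smul_eq_mul]⟩
  obtain ⟨P, hP⟩ := mulS ψ
  obtain ⟨Q, hQ⟩ := mulS H
  have hχ' : (χ : Eu m → ℂ) = pF (fun y => P y) := by
    funext x; rw [hχ]; simp only [hP]
  rw [hT]
  simp only [hF, hG]
  have hQ' : (fun y => Φ y * H y) = (Q : Eu m → ℂ) := funext fun x => (hQ x).symm
  rw [hQ', integral_pFinv_mul H.integrable χ.integrable,
    integral_pFinv_mul Q.integrable φ.integrable]
  have hpp : pFinv (χ : Eu m → ℂ) = fun x => P x := by rw [hχ']; exact funext (pFinv_pF P)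
  rw [hpp]
  simp only [hP, hQ, hψ]
  congr 1; funext x; ring

/-- The continuous function chosen in `LPfun` is unique: two candidates have the same integral against
every smooth compactly supported function, hence agree almost everywhere, hence everywhere. -/
lemma LPfun_eq_s7 {m : ℕ} (Φ : SchwartzMap (Eu m) ℂ) (T : TD m) (g : Eu m → ℂ)
    (hg : IsLPpiece Φ T g) : LPfun Φ T = g := by
  have hex : ∃ g, IsLPpiece Φ T g := ⟨g, hg⟩
  rw [LPfun, dif_pos hex]
  obtain ⟨hc, hc2⟩ := hex.choose_spec
  set g' := hex.choose
  have hae : g' =ᵐ[volume] g := by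
    refine ae_eq_of_integral_contDiff_smul_eq hc.locallyIntegrable hg.1.locallyIntegrable ?_
    intro f hf hfc
    have hfc' : HasCompactSupport (fun x => (f x : ℂ)) := hfc.comp_left (g := Complex.ofReal) rfl
    let φ : SchwartzMap (Eu m) ℂ := hfc'.toSchwartzMap (Complex.ofRealCLM.contDiff.comp hf)
    obtain ⟨ψ, hψ⟩ := exists_pFinv_schwartz φ
    obtain ⟨χ, hχ⟩ := exists_pF_schwartz (SchwartzMap.smulLeftCLM ℂ (Φ : Eu m → ℂ) ψ)
    simp only [SchwartzMap.smulLeftCLM_apply_apply Φ.hasTemperateGrowth, smul_eq_mul] at hχ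
    have h1 := hc2 φ ψ χ hψ hχ
    rw [hg.2 φ ψ χ hψ hχ] at h1
    have hφ : ∀ x, φ x = (f x : ℂ) := fun x => rfl
    simp only [hφ] at h1
    simp only [Complex.real_smul, mul_comm ((f _ : ℝ) : ℂ)]
    exact h1.symm
  exact (hc.ae_eq_iff_eq volume hg.1).1 hae

/-! ### One-dimensional building blocks -/

lemma pFinv1_eq_fourier (f : ℝ → ℂ) (t : ℝ) :
    pFinv1 f t = ((2 * Real.pi)⁻¹ : ℝ) •
      FourierTransform.fourier f (-(2 * Real.pi)⁻¹ * t) := by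
  have hpi : (Real.pi : ℂ) ≠ 0 := by exact_mod_cast Real.pi_ne_zero
  rw [pFinv1, Real.fourier_eq']
  congr 2
  funext x
  rw [smul_eq_mul]
  congr 2
  simp only [RCLike.inner_apply, conj_trivial]
  push_cast
  field_simp

lemma exists_pFinv1_schwartz (h : SchwartzMap ℝ ℂ) :
    ∃ S : SchwartzMap ℝ ℂ, ∀ t, S t = pFinv1 (fun y => h y) t := by
  let u : ℝˣ := Units.mk0 (-(2 * Real.pi)⁻¹) (neg_ne_zero.2 (by positivity))
  let g : ℝ ≃L[ℝ] ℝ := ContinuousLinearEquiv.smulLeft u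
  refine ⟨((2 * Real.pi)⁻¹ : ℝ) • SchwartzMap.compCLMOfContinuousLinearEquiv ℂ g
    (FourierTransform.fourier h), fun x => ?_⟩
  rw [pFinv1_eq_fourier, smul_apply,
    SchwartzMap.compCLMOfContinuousLinearEquiv_apply, Function.comp_apply,
    SchwartzMap.fourier_coe]
  rfl

/-- Fourier inversion at the origin. -/
lemma integral_pFinv1 (h : SchwartzMap ℝ ℂ) : ∫ t, pFinv1 (fun y => h y) t = h 0 := by
  have key := congrArg (fun g : SchwartzMap ℝ ℂ => g 0)
    (FourierTransform.fourierInv_fourier_eq (E := SchwartzMap ℝ ℂ) (F := SchwartzMap ℝ ℂ) h)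
  simp only [SchwartzMap.fourierInv_coe, SchwartzMap.fourier_coe, Real.fourierInv_eq'] at key
  simp only [inner_zero_right, mul_zero, ofReal_zero, zero_mul, Complex.exp_zero, one_smul] at key
  simp only [pFinv1_eq_fourier]
  rw [integral_smul, Measure.integral_comp_mul_left (fun t => FourierTransform.fourier
    (fun y => h y) t), key, inv_neg, inv_inv, abs_neg, abs_of_pos (by positivity), smul_smul,
    inv_mul_cancel₀ (by positivity), one_smul]

/-- Dilation and modulation on the Fourier side become dilation and translation. -/
lemma pFinv1_scale (f : ℝ → ℂ) (z t : ℝ) {r : ℝ} (hr : 0 < r) :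
    pFinv1 (fun τ => cexp (-(I * ((z * τ : ℝ) : ℂ))) * f (r⁻¹ * τ)) t =
      (r : ℂ) * pFinv1 f (r * (t - z)) := by
  have h := Measure.integral_comp_mul_left
    (fun τ => cexp (I * (((r * (t - z)) * τ : ℝ) : ℂ)) * f τ) r⁻¹
  rw [inv_inv, abs_of_pos hr] at h
  have hr' : (r : ℂ) ≠ 0 := by exact_mod_cast hr.ne'
  rw [pFinv1, pFinv1, mul_smul_comm, ← Complex.real_smul, ← h]
  congr 2
  funext τ
  rw [← mul_assoc, ← Complex.exp_add]
  congr 2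
  push_cast
  field_simp
  ring

/-- `D^j(ℱ⁻¹h)(0)` is, up to `(2π)⁻¹`, the `j`-th moment of `h`. -/
lemma iteratedDeriv_pFinv1 (h : SchwartzMap ℝ ℂ) (j : ℕ) :
    (-I) ^ j * iteratedDeriv j (pFinv1 (fun y => h y)) 0 =
      ((2 * Real.pi)⁻¹ : ℝ) • ∫ x : ℝ, ((x ^ j : ℝ) : ℂ) * h x := by
  have hpi : (Real.pi : ℂ) ≠ 0 := by exact_mod_cast Real.pi_ne_zero
  have e1 : pFinv1 (fun y => h y) = fun t => ((2 * Real.pi)⁻¹ : ℝ) •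
      (FourierTransform.fourier h) (-(2 * Real.pi)⁻¹ * t) := by
    funext t; rw [pFinv1_eq_fourier, SchwartzMap.fourier_coe]
  have e2 : iteratedDeriv j (fun t => (FourierTransform.fourier h) (-(2 * Real.pi)⁻¹ * t)) =
      fun t => (-(2 * Real.pi)⁻¹ : ℝ) ^ j •
        iteratedDeriv j (FourierTransform.fourier h) (-(2 * Real.pi)⁻¹ * t) := by
    exact iteratedDeriv_comp_const_smul ((FourierTransform.fourier h).smooth _) _
  have hint : ∀ n : ℕ, Integrable (fun x : ℝ => x ^ n • h x) := by
    intro n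
    refine (integrable_norm_iff ?_).1 ?_
    · exact ((continuous_id.pow n).smul h.continuous).aestronglyMeasurable
    · simpa [norm_smul] using h.integrable_pow_mul volume n
  rw [e1, iteratedDeriv_fun_const_smul_field]
  simp only [e2]
  rw [SchwartzMap.fourier_coe, Real.iteratedDeriv_fourier (N := ⊤) (fun n _ => hint n)
    (by exact_mod_cast le_top), Real.fourier_eq', mul_smul_comm]
  congr 1
  rw [mul_smul_comm, ← integral_const_mul, ← integral_smul]
  congr 1; funext x
  simp only [mul_zero, inner_zero_right, ofReal_zero, zero_mul, Complex.exp_zero, one_mul,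
    smul_eq_mul, Complex.real_smul]
  rw [← mul_assoc, ← mul_assoc]
  congr 1
  push_cast
  rw [← mul_pow, ← mul_pow]
  congr 1
  field_simp
  simp

/-- The tangential factor: a smooth function supported in `[-ε, ε]` whose inverse Fourier transform has
integral `1`. -/
lemma exists_bump_zero {ε : ℝ} (hε : 0 < ε) :
    ∃ f : ℝ → ℂ, ContDiff ℝ (⊤ : ℕ∞) f ∧ HasCompactSupport f ∧ (∀ t, f t ≠ 0 → |t| ≤ ε) ∧
      Integrable (pFinv1 f) ∧ ContDiff ℝ (⊤ : ℕ∞) (pFinv1 f) ∧ ∫ t, pFinv1 f t = 1 := by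
  let b : ContDiffBump (0 : ℝ) := ⟨ε / 2, ε, by positivity, by linarith⟩
  have hc : HasCompactSupport (fun t => (b t : ℂ)) :=
    b.hasCompactSupport.comp_left (g := Complex.ofReal) rfl
  have hs : ContDiff ℝ (⊤ : ℕ∞) (fun t => (b t : ℂ)) := Complex.ofRealCLM.contDiff.comp b.contDiff
  obtain ⟨S, hS⟩ := exists_pFinv1_schwartz (hc.toSchwartzMap hs)
  have hS' : (S : ℝ → ℂ) = pFinv1 (fun t => (b t : ℂ)) := funext hS
  refine ⟨_, hs, hc, fun t ht => ?_, ?_, ?_, ?_⟩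
  · by_contra hcon
    push Not at hcon
    exact ht (by
      rw [b.zero_of_le_dist (by rw [Real.dist_eq, sub_zero]; exact hcon.le), ofReal_zero])
  · rw [← hS']; exact S.integrable
  · rw [← hS']; exact S.smooth _
  · refine (integral_pFinv1 (hc.toSchwartzMap hs)).trans ?_
    change ((b 0 : ℝ) : ℂ) = 1
    rw [b.one_of_mem_closedBall (by simp [b.rIn_pos.le]), ofReal_one]

/-- The normal factor: a smooth function supported in `[0.8, 1]` whose inverse Fourier transform `B`
satisfies `(D^j B)(0) = 1`. It is a nonnegative bump divided by its `j`-th moment (and by `(2π)⁻¹`),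
which is positive since the support lies in `(0, ∞)`. -/
lemma exists_bump_one (j : ℕ) :
    ∃ f : ℝ → ℂ, ContDiff ℝ (⊤ : ℕ∞) f ∧ HasCompactSupport f ∧
      (∀ t, f t ≠ 0 → 8 / 10 ≤ t ∧ t ≤ 1) ∧ ContDiff ℝ (⊤ : ℕ∞) (pFinv1 f) ∧
      (-I) ^ j * iteratedDeriv j (pFinv1 f) 0 = 1 := by
  let b : ContDiffBump (9 / 10 : ℝ) := ⟨1 / 20, 1 / 10, by positivity, by norm_num⟩
  have hsupp : ∀ t, b t ≠ 0 → 8 / 10 ≤ t ∧ t ≤ 1 := by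
    intro t ht
    by_contra hcon
    refine ht (b.zero_of_le_dist ?_)
    rw [Real.dist_eq]
    change (1 / 10 : ℝ) ≤ _
    by_contra h2
    push Not at h2
    rw [abs_lt] at h2
    exact hcon ⟨by linarith, by linarith⟩
  have hpos : 0 < ∫ x : ℝ, x ^ j * b x := by
    refine Continuous.integral_pos_of_hasCompactSupport_nonneg_nonzero (x := 9 / 10) ?_ ?_ ?_ ?_
    · exact (continuous_id.pow j).mul b.continuous
    · exact b.hasCompactSupport.mul_left
    · intro x
      by_cases h : b x = 0
      · simp [h]
      · have := hsupp x h
        exact mul_nonneg (pow_nonneg (by linarith) _) b.nonneg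
    · rw [b.one_of_mem_closedBall (by simp [b.rIn_pos.le])]
      positivity
  set κ : ℝ := (2 * Real.pi)⁻¹ * ∫ x : ℝ, x ^ j * b x with hκ
  have hκ0 : κ ≠ 0 := by positivity
  have hc : HasCompactSupport (fun t => ((κ⁻¹ * b t : ℝ) : ℂ)) :=
    b.hasCompactSupport.comp_left (g := fun y : ℝ => ((κ⁻¹ * y : ℝ) : ℂ)) (by simp)
  have hs : ContDiff ℝ (⊤ : ℕ∞) (fun t => ((κ⁻¹ * b t : ℝ) : ℂ)) :=
    Complex.ofRealCLM.contDiff.comp (contDiff_const.mul b.contDiff)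
  obtain ⟨S, hS⟩ := exists_pFinv1_schwartz (hc.toSchwartzMap hs)
  have hS' : (S : ℝ → ℂ) = pFinv1 (fun t => ((κ⁻¹ * b t : ℝ) : ℂ)) := funext hS
  refine ⟨_, hs, hc, fun t ht => hsupp t ?_, ?_, ?_⟩
  · rintro h; simp [h] at ht
  · rw [← hS']; exact S.smooth _
  · refine (iteratedDeriv_pFinv1 (hc.toSchwartzMap hs) j).trans ?_
    have : ∀ x, ((x ^ j : ℝ) : ℂ) * (hc.toSchwartzMap hs) x = ((κ⁻¹ * (x ^ j * b x) : ℝ) : ℂ) := by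
      intro x
      change ((x ^ j : ℝ) : ℂ) * ((κ⁻¹ * b x : ℝ) : ℂ) = _
      push_cast; ring
    simp only [this]
    rw [integral_complex_ofReal, integral_const_mul, Complex.real_smul, ← ofReal_mul, mul_left_comm, ← hκ,
      inv_mul_cancel₀ hκ0, ofReal_one]

/-! ### Product wavelets, scaling, and the `ℓ_q` estimate -/

lemma pFinv_prod {k : ℕ} (f : Fin k → ℝ → ℂ) (x : Eu k) :
    pFinv (fun ξ => ∏ i, f i (ξ i)) x = ∏ i, pFinv1 (f i) (x i) := by
  simp only [pFinv, pFinv1]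
  have : ∀ ξ : Eu k, cexp (I * (dotp x ξ : ℂ)) * ∏ i, f i (ξ i) =
      ∏ i, (fun i (τ : ℝ) => cexp (I * ((x i * τ : ℝ) : ℂ)) * f i τ) i (ξ i) := by
    intro ξ
    simp only [dotp, ofReal_sum, Finset.mul_sum, Complex.exp_sum, Finset.prod_mul_distrib]
  simp only [this]
  rw [integral_fintype_prod_volume_eq_prod (fun i (τ : ℝ) => cexp (I * ((x i * τ : ℝ) : ℂ)) * f i τ)]
  simp only [Complex.real_smul, Finset.prod_mul_distrib, Finset.prod_const, Finset.card_univ,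
    Fintype.card_fin]
  push_cast
  rw [inv_pow]

lemma pFinv_const_mul {k : ℕ} (c : ℂ) (f : Eu k → ℂ) (x : Eu k) :
    pFinv (fun ξ => c * f ξ) x = c * pFinv f x := by
  simp only [pFinv]
  rw [mul_smul_comm, ← integral_const_mul]
  congr 2; funext ξ; ring

/-- The translated and dilated product function `c ∏ᵢ r (ℱ⁻¹fᵢ)(r (xᵢ - zᵢ))` is a Schwartz function `W`,
and it is the inverse Fourier transform of the Schwartz function
`H(ξ) = c ∏ᵢ e^{-i zᵢ ξᵢ} fᵢ(ξᵢ / r)`. -/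
lemma exists_wavelet {k : ℕ} (f : Fin k → ℝ → ℂ) (hf : ∀ i, ContDiff ℝ (⊤ : ℕ∞) (f i))
    (hc : ∀ i, HasCompactSupport (f i)) (z : Eu k) (c : ℂ) {r : ℝ} (hr : 0 < r) :
    ∃ H W : SchwartzMap (Eu k) ℂ,
      (∀ ξ, H ξ = c * ∏ i, (cexp (-(I * ((z i * ξ i : ℝ) : ℂ))) * f i (r⁻¹ * ξ i))) ∧
      (∀ x, W x = pFinv (fun y => H y) x) ∧
      (∀ x, W x = c * ∏ i, ((r : ℂ) * pFinv1 (f i) (r * (x i - z i)))) := by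
  have hs : ContDiff ℝ (⊤ : ℕ∞) (fun ξ : Eu k =>
      c * ∏ i, (cexp (-(I * ((z i * ξ i : ℝ) : ℂ))) * f i (r⁻¹ * ξ i))) := by
    refine contDiff_const.mul (contDiff_prod fun i _ => ContDiff.mul ?_ ?_)
    · refine ContDiff.cexp (ContDiff.neg (contDiff_const.mul ?_))
      exact Complex.ofRealCLM.contDiff.comp (contDiff_const.mul (contDiff_apply ℝ ℝ i))
    · exact (hf i).comp (contDiff_const.mul (contDiff_apply ℝ ℝ i))
  have hcs : HasCompactSupport (fun ξ : Eu k =>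
      c * ∏ i, (cexp (-(I * ((z i * ξ i : ℝ) : ℂ))) * f i (r⁻¹ * ξ i))) := by
    have hK : ∀ i, HasCompactSupport (fun t => f i (r⁻¹ * t)) := fun i =>
      (hc i).comp_homeomorph (Homeomorph.mulLeft₀ r⁻¹ (inv_ne_zero hr.ne'))
    refine HasCompactSupport.intro (isCompact_univ_pi hK) fun ξ hξ => ?_
    simp only [Set.mem_pi, Set.mem_univ, true_implies, not_forall] at hξ
    obtain ⟨i, hi⟩ := hξ
    have : f i (r⁻¹ * ξ i) = 0 := image_eq_zero_of_notMem_tsupport (f := fun t => f i (r⁻¹ * t)) hi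
    rw [Finset.prod_eq_zero (Finset.mem_univ i) (by rw [this, mul_zero]), mul_zero]
  obtain ⟨W, hW⟩ := exists_pFinv_schwartz (hcs.toSchwartzMap hs)
  refine ⟨hcs.toSchwartzMap hs, W, fun ξ => rfl, hW, fun x => ?_⟩
  rw [hW]
  refine (pFinv_const_mul c (fun ξ : Eu k =>
    ∏ i, (cexp (-(I * ((z i * ξ i : ℝ) : ℂ))) * f i (r⁻¹ * ξ i))) x).trans ?_
  rw [pFinv_prod (fun i τ => cexp (-(I * ((z i * τ : ℝ) : ℂ))) * f i (r⁻¹ * τ))]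
  simp only [pFinv1_scale _ _ _ hr]

/-- On the annulus `13/20 ≤ 2^{-l}|ξ| ≤ 11/10` the symbol `Φ_l` is `1` and all other `Φ_i` vanish. -/
lemma LPsym_annulus {Ψ : ℝ → ℝ} (hΨ : GoodPsi Ψ) {k : ℕ} (i l : ℕ) (ξ : Eu k)
    (h1 : 13 / 20 ≤ (2 : ℝ)⁻¹ ^ l * eun ξ) (h2 : (2 : ℝ)⁻¹ ^ l * eun ξ ≤ 11 / 10) :
    LPsym Ψ i ξ = if i = l then 1 else 0 := by
  obtain ⟨-, hone, hzero⟩ := hΨ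
  set r := (2 : ℝ)⁻¹ ^ l * eun ξ with hr
  have h2l : (2 : ℝ) ^ l * (2 : ℝ)⁻¹ ^ l = 1 := by rw [← mul_pow]; norm_num
  have hξ : eun ξ = 2 ^ l * r := by rw [hr, ← mul_assoc, h2l, one_mul]
  have e1 : (2 : ℝ) ^ (-(i : ℝ)) * eun ξ = (2 : ℝ) ^ ((l : ℝ) - i) * r := by
    rw [hξ, ← mul_assoc, ← Real.rpow_natCast, ← Real.rpow_add two_pos]; ring_nf
  have e2 : (2 : ℝ) ^ (1 - (i : ℝ)) * eun ξ = (2 : ℝ) ^ (1 + (l : ℝ) - i) * r := by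
    rw [hξ, ← mul_assoc, ← Real.rpow_natCast, ← Real.rpow_add two_pos]; ring_nf
  rw [LPsym, e1, e2]
  have big : ∀ s : ℝ, 1 ≤ s → Ψ ((2 : ℝ) ^ s * r) = 0 := fun s hs => by
    refine hzero _ ?_
    have : (2 : ℝ) ≤ 2 ^ s := by
      simpa using Real.rpow_le_rpow_of_exponent_le (x := 2) one_le_two hs
    nlinarith
  have small : ∀ s : ℝ, s ≤ 0 → Ψ ((2 : ℝ) ^ s * r) = 1 := fun s hs => by
    refine hone _ ?_
    have : (2 : ℝ) ^ s ≤ 1 := by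
      simpa using Real.rpow_le_rpow_of_exponent_le (x := 2) one_le_two hs
    nlinarith
  rcases lt_trichotomy i l with h | h | h
  · have : (i : ℝ) + 1 ≤ l := by exact_mod_cast h
    rw [big _ (by linarith), big _ (by linarith), if_neg h.ne]; simp
  · subst h
    rw [small _ (by simp), big _ (by simp), if_pos rfl]; simp
  · have : (l : ℝ) + 1 ≤ i := by exact_mod_cast h
    rw [small _ (by linarith), small _ (by linarith), if_neg h.ne', if_neg (by omega)]; simp

/-- `L_p` norms under dilation about `z`. -/
lemma eLpNorm_dilate {k : ℕ} (w : Eu k → ℂ) (hw : Continuous w) (z : Eu k) {r : ℝ} (hr : 0 < r)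
    {p : ℝ≥0∞} (hp : p ≠ ∞) :
    eLpNorm (fun x => w (r • (x - z) + z)) p volume =
      ENNReal.ofReal (r ^ (-((k : ℝ) * iv p))) * eLpNorm w p volume := by
  have hm : Measure.map (fun x : Eu k => r • (x - z) + z) volume =
      ENNReal.ofReal ((r ^ k)⁻¹) • volume := by
    have : (fun x : Eu k => r • (x - z) + z) = (fun x => x + z) ∘ (fun x => r • x) ∘
      (fun x => x - z) := rfl
    rw [this, ← Measure.map_map (by fun_prop) (by fun_prop),
      ← Measure.map_map (by fun_prop) (by fun_prop), (measurePreserving_sub_right volume z).map_eq,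
      Measure.map_addHaar_smul volume hr.ne', Measure.map_smul,
      (measurePreserving_add_right volume z).map_eq]
    simp [abs_of_pos hr]
  have := eLpNorm_map_measure (μ := volume) (p := p) (f := fun x : Eu k => r • (x - z) + z) (g := w)
    hw.aestronglyMeasurable (by fun_prop)
  rw [hm, eLpNorm_smul_measure_of_ne_top hp] at this
  change _ = eLpNorm (w ∘ _) p volume at this
  rw [Function.comp_def] at this
  rw [← this, smul_eq_mul]
  congr 1
  rw [ENNReal.ofReal_rpow_of_nonneg (by positivity) (by simp)]
  congr 1
  rw [Real.rpow_neg hr.le, Real.inv_rpow (by positivity), Real.rpow_mul hr.le, Real.rpow_natCast]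
  simp [iv]

/-- The `ℓ_q` norm of `k` terms all equal to `M / k` is `k^{1/q - 1} M`, which tends to `0` for `q > 1`. -/
lemma tendsto_ellqNorm {M : ℝ≥0∞} (hM : M ≠ ∞) {q : ℝ≥0∞} (hq : 1 < q) :
    Tendsto (fun k : ℕ => ellqNorm q (fun i => if i < k then (k : ℝ≥0∞)⁻¹ * M else 0))
      atTop (𝓝 0) := by
  have h0 : Tendsto (fun k : ℕ => (k : ℝ≥0∞)⁻¹ * M) atTop (𝓝 0) := by
    have := ENNReal.Tendsto.mul_const (b := M) ENNReal.tendsto_inv_nat_nhds_zero (Or.inr hM)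
    rwa [zero_mul] at this
  by_cases hqt : q = ∞
  · refine tendsto_of_tendsto_of_tendsto_of_le_of_le tendsto_const_nhds h0 (fun _ => zero_le)
      fun k => ?_
    simp only [ellqNorm, if_pos hqt]
    exact iSup_le fun i => by split_ifs <;> simp
  · have hq1 : 1 < q.toReal := by
      rw [← ENNReal.toReal_one]; exact (ENNReal.toReal_lt_toReal (by simp) hqt).2 hq
    set s := q.toReal with hs
    have hs0 : 0 < s := by linarith
    have hval : ∀ k : ℕ, 0 < k →
        ellqNorm q (fun i => if i < k then (k : ℝ≥0∞)⁻¹ * M else 0) =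
          ((k : ℝ≥0∞)⁻¹) ^ (1 - 1 / s) * M := by
      intro k hk
      have hk0 : (k : ℝ≥0∞) ≠ 0 := by exact_mod_cast hk.ne'
      have hkt : (k : ℝ≥0∞) ≠ ∞ := by simp
      simp only [ellqNorm, if_neg hqt]
      rw [tsum_eq_sum (s := Finset.range k) (fun i hi => by
        rw [if_neg (by simpa using hi), ENNReal.zero_rpow_of_pos hs0])]
      rw [Finset.sum_congr rfl (fun i hi => by rw [if_pos (Finset.mem_range.1 hi)]),
        Finset.sum_const, Finset.card_range, nsmul_eq_mul,
        ENNReal.mul_rpow_of_nonneg _ _ (by positivity), ← ENNReal.rpow_mul,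
        mul_one_div_cancel hs0.ne', ENNReal.rpow_one, ← mul_assoc]
      congr 1
      rw [sub_eq_add_neg, ENNReal.rpow_add _ _ (by simp) (by simpa using hk.ne'), ENNReal.rpow_one,
        ENNReal.inv_rpow, ← ENNReal.rpow_neg, neg_neg, mul_comm]
    have hlim : Tendsto (fun k : ℕ => ((k : ℝ≥0∞)⁻¹) ^ (1 - 1 / s) * M) atTop (𝓝 0) := by
      have he : 0 < 1 - 1 / s := by rw [sub_pos, div_lt_one hs0]; exact hq1
      have h1 := (ENNReal.continuous_rpow_const (y := 1 - 1 / s)).tendsto 0 |>.comp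
        ENNReal.tendsto_inv_nat_nhds_zero
      rw [ENNReal.zero_rpow_of_pos he] at h1
      have := ENNReal.Tendsto.mul_const (b := M) h1 (Or.inr hM)
      rwa [zero_mul] at this
    refine hlim.congr' ?_
    filter_upwards [eventually_gt_atTop 0] with k hk using (hval k hk).symm

/-! ### Traces and the approximate identity -/

lemma contDiff_snoc {m : ℕ} (x' : Eu m) :
    ContDiff ℝ (⊤ : ℕ∞) (fun t : ℝ => (Fin.snoc x' t : Eu (m + 1))) := by
  refine contDiff_pi.2 fun i => ?_
  refine Fin.lastCases ?_ (fun i => ?_) i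
  · simp only [Fin.snoc_last]
    exact contDiff_id
  · simpa using contDiff_const

lemma traceJ_sum {m : ℕ} (j : ℕ) (s : Finset ℕ) (c : ℂ) (W : ℕ → SchwartzMap (Eu (m + 1)) ℂ)
    (x' : Eu m) :
    traceJ j (fun x => c * ∑ l ∈ s, W l x) x' = c * ∑ l ∈ s, traceJ j (fun x => W l x) x' := by
  simp only [traceJ]
  rw [iteratedDeriv_const_mul_field, iteratedDeriv_fun_sum, ← Finset.mul_sum]
  · ring
  · intro l _
    exact (((W l).smooth ⊤).comp (contDiff_snoc x')).contDiffAt.of_le (by exact_mod_cast le_top)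

lemma schwartz_bounded {m : ℕ} (ψ : SchwartzMap (Eu m) ℂ) : ∃ C, ∀ x, ‖ψ x‖ ≤ C :=
  ⟨_, fun x => SchwartzMap.norm_le_seminorm ℂ ψ x⟩

lemma integrable_dilate {m : ℕ} {K : Eu m → ℂ} (hK : Integrable K) (z : Eu m) {r : ℝ}
    (hr : 0 < r) : Integrable (fun x => K (r • (x - z))) :=
  ((integrable_comp_smul_iff volume K hr.ne').2 hK).comp_sub_right z

/-- The dilates `2^{lm} K(2^l (x - z))` form an approximate identity at `z`; no sign is assumed on `K`. -/
lemma tendsto_approx_identity {m : ℕ} {K : Eu m → ℂ} (hK : Integrable K) (hK1 : ∫ x, K x = 1)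
    (z : Eu m) (ψ : SchwartzMap (Eu m) ℂ) :
    Tendsto (fun l : ℕ => ∫ x, (((2 : ℝ) ^ l : ℝ) : ℂ) ^ m * K ((2 : ℝ) ^ l • (x - z)) * ψ x)
      atTop (𝓝 (ψ z)) := by
  have h1 : ∀ l : ℕ, ∫ x, (((2 : ℝ) ^ l : ℝ) : ℂ) ^ m * K ((2 : ℝ) ^ l • (x - z)) * ψ x =
      ∫ y, K y * ψ (((2 : ℝ) ^ l)⁻¹ • y + z) := by
    intro l
    have hr : (0 : ℝ) < 2 ^ l := by positivity
    set r : ℝ := 2 ^ l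
    have hs := Measure.integral_comp_smul volume (fun y : Eu m => K y * ψ (r⁻¹ • y + z)) r
    have ht := integral_sub_right_eq_self (μ := (volume : Measure (Eu m)))
      (fun x : Eu m => K (r • x) * ψ (r⁻¹ • (r • x) + z)) z
    rw [hs] at ht
    simp only [smul_smul, inv_mul_cancel₀ hr.ne', one_smul, sub_add_cancel] at ht
    simp only [mul_assoc]
    rw [integral_const_mul, ht, Module.finrank_fin_fun, abs_of_pos (by positivity),
      Complex.real_smul, ← mul_assoc]
    have : (r : ℂ) ≠ 0 := by exact_mod_cast hr.ne'
    push_cast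
    rw [mul_inv_cancel₀ (pow_ne_zero _ this), one_mul]
  simp only [h1]
  obtain ⟨C, hC⟩ := schwartz_bounded ψ
  have : ψ z = ∫ y, K y * ψ z := by rw [integral_mul_const, hK1, one_mul]
  rw [this]
  refine tendsto_integral_of_dominated_convergence (fun y => ‖K y‖ * C) (fun l => ?_)
    (hK.norm.mul_const C) (fun l => ?_) ?_
  · refine hK.aestronglyMeasurable.mul (Continuous.aestronglyMeasurable ?_)
    exact ψ.continuous.comp (by fun_prop)
  · refine Eventually.of_forall fun y => ?_
    rw [norm_mul]
    gcongr
    exact hC _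
  · refine Eventually.of_forall fun y => ?_
    refine Tendsto.const_mul _ ((ψ.continuous.tendsto z).comp ?_)
    have h2 : Tendsto (fun l : ℕ => ((2 : ℝ) ^ l)⁻¹) atTop (𝓝 0) :=
      tendsto_inv_atTop_zero.comp (tendsto_pow_atTop_atTop_of_one_lt one_lt_two)
    simpa using (h2.smul_const y).add_const z

/-- The wavelets `W l(x) = 2^{l(m-j)} W 0(2^l (x - z) + z)`, `z = (z', 0)`, with Fourier transforms `H l`
on which `Φ_i` acts as the Kronecker delta, and whose `j`-th traces are the approximate identity
generated by a function `K` of integral `1`. -/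
lemma exists_family {Ψ : ℝ → ℝ} (hΨ : GoodPsi Ψ) {m : ℕ}
    {Φn : ℕ → SchwartzMap (Eu (m + 1)) ℂ} (hΦn : IsLP Ψ Φn) (j : ℕ) (z' : Eu m) :
    ∃ (H W : ℕ → SchwartzMap (Eu (m + 1)) ℂ) (K : Eu m → ℂ),
      (∀ i l y, Φn i y * H l y = if i = l then H l y else 0) ∧
      (∀ l x, W l x = pFinv (fun y => H l y) x) ∧
      (∀ l x, W l x = ((((2 : ℝ) ^ l : ℝ) : ℂ) ^ (j + 1))⁻¹ * (((2 : ℝ) ^ l : ℝ) : ℂ) ^ (m + 1) *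
        W 0 ((2 : ℝ) ^ l • (x - (Fin.snoc z' 0 : Eu (m + 1))) + (Fin.snoc z' 0 : Eu (m + 1)))) ∧
      Integrable K ∧ ∫ y, K y = 1 ∧
      (∀ l x', traceJ j (fun x => W l x) x' =
        (((2 : ℝ) ^ l : ℝ) : ℂ) ^ m * K ((2 : ℝ) ^ l • (x' - z'))) := by
  -- With this `ε`, the tangential frequencies satisfy `|ξ'|² ≤ m ε² ≤ 1/16`, so that together with
  -- `0.8 ≤ ξ_n ≤ 1` the frequency support lies in the annulus of `LPsym_annulus`.
  set ε : ℝ := 1 / (4 * (m + 1)) with hε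
  have hε0 : 0 < ε := by positivity
  obtain ⟨a, ha, hac, has, haI, -, ha1⟩ := exists_bump_zero hε0
  obtain ⟨b, hb, hbc, hbs, hbd, hb1⟩ := exists_bump_one j
  let f : Fin (m + 1) → ℝ → ℂ := Fin.snoc (α := fun _ => ℝ → ℂ) (fun _ => a) b
  have fc : ∀ i : Fin m, f i.castSucc = a := fun i => by simp [f]
  have fl : f (Fin.last m) = b := by simp [f]
  have hf : ∀ i, ContDiff ℝ (⊤ : ℕ∞) (f i) := fun i =>
    Fin.lastCases (by rw [fl]; exact hb) (fun i => by rw [fc]; exact ha) i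
  have hfc : ∀ i, HasCompactSupport (f i) := fun i =>
    Fin.lastCases (by rw [fl]; exact hbc) (fun i => by rw [fc]; exact hac) i
  set z : Eu (m + 1) := Fin.snoc z' 0 with hz
  have zc : ∀ i : Fin m, z i.castSucc = z' i := fun i => by simp [z]
  have zl : z (Fin.last m) = 0 := by simp [z]
  choose H W hH hW hW' using fun l : ℕ => exists_wavelet f hf hfc z
    (((((2 : ℝ) ^ l : ℝ) : ℂ) ^ (j + 1))⁻¹) (r := (2 : ℝ) ^ l) (by positivity)
  refine ⟨H, W, fun y => ∏ i, pFinv1 a (y i), fun i l y => ?_, hW, fun l x => ?_, ?_, ?_,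
    fun l x' => ?_⟩
  · by_cases h0 : H l y = 0
    · simp [h0]
    · have hne : ∀ i, f i (((2 : ℝ) ^ l)⁻¹ * y i) ≠ 0 := by
        intro i hi
        apply h0
        rw [hH, Finset.prod_eq_zero (Finset.mem_univ i) (by rw [hi, mul_zero]), mul_zero]
      have hlast := hbs (((2 : ℝ) ^ l)⁻¹ * y (Fin.last m)) (by rw [← fl]; exact hne _)
      have hinit : ∀ i : Fin m, |((2 : ℝ) ^ l)⁻¹ * y i.castSucc| ≤ ε := fun i =>
        has _ (by rw [← fc i]; exact hne _)
      have he : (2 : ℝ)⁻¹ ^ l * eun y =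
          Real.sqrt (∑ i : Fin m, (((2 : ℝ) ^ l)⁻¹ * y i.castSucc) ^ 2 +
            (((2 : ℝ) ^ l)⁻¹ * y (Fin.last m)) ^ 2) := by
        rw [eun, Fin.sum_univ_castSucc, inv_pow]
        simp only [mul_pow]
        rw [← Finset.mul_sum, ← mul_add, Real.sqrt_mul (by positivity), Real.sqrt_sq (by positivity)]
      have hS0 : 0 ≤ ∑ i : Fin m, (((2 : ℝ) ^ l)⁻¹ * y i.castSucc) ^ 2 :=
        Finset.sum_nonneg fun i _ => sq_nonneg _
      have hS1 : ∑ i : Fin m, (((2 : ℝ) ^ l)⁻¹ * y i.castSucc) ^ 2 ≤ 1 / 16 := by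
        calc _ ≤ ∑ i : Fin m, ε ^ 2 := Finset.sum_le_sum fun i _ => by
              rw [← sq_abs]; exact pow_le_pow_left₀ (abs_nonneg _) (hinit i) 2
          _ = m * ε ^ 2 := by simp
          _ ≤ 1 / 16 := by
              have h4 : ε * (4 * (m + 1)) = 1 := by rw [hε]; field_simp
              have hm0 : (0 : ℝ) ≤ m := by positivity
              nlinarith [mul_nonneg hm0 hε0.le, mul_nonneg hm0 (sq_nonneg ε), sq_nonneg ε]
      rw [hΦn, LPsym_annulus hΨ i l y]
      · split_ifs <;> simp
      · rw [he]; refine Real.le_sqrt_of_sq_le ?_; nlinarith [hlast.1]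
      · rw [he, Real.sqrt_le_left (by norm_num)]; nlinarith [hlast.1, hlast.2]
  · rw [hW', hW']
    simp only [pow_zero, ofReal_one, one_pow, inv_one, one_mul, Pi.add_apply, Pi.smul_apply,
      Pi.sub_apply, add_sub_cancel_right, smul_eq_mul]
    rw [Finset.prod_mul_distrib, Finset.prod_const, Finset.card_univ, Fintype.card_fin, mul_assoc]
  · exact Integrable.fintype_prod (f := fun _ => pFinv1 a) fun _ => haI
  · rw [integral_fintype_prod_volume_eq_prod (fun _ => pFinv1 a)]
    simp [ha1]
  · have hr : ((((2 : ℝ) ^ l : ℝ) : ℂ)) ≠ 0 := by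
      exact_mod_cast (by positivity : ((2 : ℝ) ^ l) ≠ 0)
    simp only [traceJ, hW']
    simp only [Fin.prod_univ_castSucc, Fin.snoc_castSucc, Fin.snoc_last, fc, fl, zc, zl, sub_zero,
      ← mul_assoc]
    rw [iteratedDeriv_const_mul_field,
      iteratedDeriv_comp_const_smul (hbd.of_le (by exact_mod_cast le_top))]
    simp only [mul_zero, Pi.smul_apply, Pi.sub_apply, smul_eq_mul]
    rw [Finset.prod_mul_distrib, Finset.prod_const, Finset.card_univ, Fintype.card_fin,
      Complex.real_smul]
    set R : ℂ := (((2 : ℝ) ^ l : ℝ) : ℂ)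
    set P := ∏ i : Fin m, pFinv1 a ((2 : ℝ) ^ l * (x' i - z' i))
    rw [ofReal_pow]
    calc _ = ((R ^ (j + 1))⁻¹ * R ^ (j + 1)) * R ^ m * P * ((-I) ^ j * iteratedDeriv j (pFinv1 b) 0) := by
          ring
      _ = _ := by rw [hb1, inv_mul_cancel₀ (pow_ne_zero _ hr)]; ring

/-! ### Averages of wavelets -/

lemma pFinv_sum {m : ℕ} (s : Finset ℕ) (H : ℕ → SchwartzMap (Eu m) ℂ) (x : Eu m) :
    pFinv (fun y => ∑ l ∈ s, H l y) x = ∑ l ∈ s, pFinv (fun y => H l y) x := by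
  simp only [pFinv, Finset.mul_sum]
  rw [integral_finsetSum, Finset.smul_sum]
  intro l _
  refine (H l).integrable.bdd_mul (c := 1) ?_ ?_
  · refine Continuous.aestronglyMeasurable ?_
    unfold dotp
    fun_prop
  · refine Eventually.of_forall fun z => ?_
    rw [mul_comm, Complex.norm_exp_ofReal_mul_I]

/-- Counterexample sequence with traces converging to a Dirac distribution. -/
theorem statement_7 (m : ℕ) (hm : 1 ≤ m) (Ψ : ℝ → ℝ) (hΨ : GoodPsi Ψ)
    (Φn : ℕ → SchwartzMap (Eu (m + 1)) ℂ) (hΦn : IsLP Ψ Φn)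
    (j : ℕ) (z' : Eu m) :
    ∃ V : ℕ → SchwartzMap (Eu (m + 1)) ℂ,
      (∀ ψ : SchwartzMap (Eu m) ℂ,
        Tendsto (fun k => ∫ x' : Eu m, traceJ j (fun x => V k x) x' * ψ x')
          atTop (𝓝 (ψ z'))) ∧
      (∀ p q : ℝ≥0∞, 0 < p → p ≤ 1 → 1 < q →
        ∀ T : ℕ → TD (m + 1), (∀ k, Represents (T k) (fun x => V k x)) →
          Tendsto
            (fun k => besovNormD Φn (((m : ℝ) + 1) * iv p - (m : ℝ) + (j : ℝ)) p q (T k))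
            atTop (𝓝 0)) := by
  obtain ⟨H, W, K, hΦH, hWH, hWs, hKI, hK1, hWt⟩ := exists_family hΨ hΦn j z'
  have hsum : ∀ (F : ℕ → SchwartzMap (Eu (m + 1)) ℂ) (k : ℕ) (x : Eu (m + 1)),
      (((k : ℂ)⁻¹) • ∑ l ∈ Finset.range k, F l) x = (k : ℂ)⁻¹ * ∑ l ∈ Finset.range k, F l x := by
    intro F k x
    rw [smul_apply, sum_apply, smul_eq_mul]
  refine ⟨fun k => ((k : ℂ)⁻¹) • ∑ l ∈ Finset.range k, W l, fun ψ => ?_, ?_⟩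
  · have hlim := (tendsto_approx_identity hKI hK1 z' ψ).cesaro_smul
    refine hlim.congr fun k => ?_
    simp only [hsum, traceJ_sum, hWt]
    simp only [mul_assoc, Finset.sum_mul]
    rw [integral_const_mul, integral_finsetSum, Complex.real_smul]
    · push_cast; rfl
    · intro l _
      obtain ⟨C, hC⟩ := schwartz_bounded ψ
      exact ((integrable_dilate hKI z' (r := 2 ^ l) (by positivity)).mul_bdd (c := C)
        ψ.continuous.aestronglyMeasurable (Eventually.of_forall hC)).const_mul _
  · intro p q hp0 hp1 hq T hT
    have hpt : p ≠ ∞ := ne_top_of_le_ne_top ENNReal.one_ne_top hp1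
    have hM : eLpNorm (W 0) p volume ≠ ∞ := by
      have h := (W 0).memLp p volume
      exact h.2.ne
    refine (tendsto_ellqNorm hM hq).congr fun k => ?_
    rw [besovNormD, besovNormSeq]
    congr 1
    funext i
    set c : ℂ := if i < k then (k : ℂ)⁻¹ else 0 with hc
    -- The `i`-th Littlewood–Paley piece of `V k` is the `i`-th summand, or `0` if `i ≥ k`.
    have hpiece : LPfun (Φn i) (T k) = fun x => (c • W i) x := by
      refine LPfun_eq_s7 _ _ _ (isLPpiece_of_represents (Φn i)
        (((k : ℂ)⁻¹) • ∑ l ∈ Finset.range k, H l) _ _ (T k) (hT k) ?_ ?_)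
      · intro x
        simp only [hsum, hWH]
        rw [pFinv_const_mul, pFinv_sum]
      · intro x
        have : (fun y => Φn i y * (((k : ℂ)⁻¹) • ∑ l ∈ Finset.range k, H l) y) =
            fun y => c * H i y := by
          funext y
          rw [hsum, mul_left_comm, Finset.mul_sum]
          simp only [hΦH, Finset.sum_ite_eq, Finset.mem_range, hc]
          split_ifs <;> simp
        rw [this, pFinv_const_mul, ← hWH, smul_apply, smul_eq_mul]
    rw [hpiece]
    have hr : (0 : ℝ) < 2 ^ i := by positivity
    set r : ℝ := 2 ^ i with hrdef
    set z : Eu (m + 1) := Fin.snoc z' 0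
    have hfun : (fun x => (c • W i) x) =
        (c * (((r : ℂ) ^ (j + 1))⁻¹ * (r : ℂ) ^ (m + 1))) •
          fun x => W 0 (r • (x - z) + z) := by
      funext x
      rw [smul_apply, hWs i x, Pi.smul_apply, smul_eq_mul, smul_eq_mul, mul_assoc c]
    rw [hfun, eLpNorm_const_smul, eLpNorm_dilate _ (W 0).continuous z hr hpt, enorm_mul]
    have hce : ‖c‖ₑ = if i < k then (k : ℝ≥0∞)⁻¹ else 0 := by
      rw [hc]
      split_ifs with h
      · rw [enorm_inv (by exact_mod_cast (by omega : k ≠ 0))]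
        congr 1
        rw [← ofReal_norm, Complex.norm_natCast, ENNReal.ofReal_natCast]
      · simp
    have hre : ‖((r : ℂ) ^ (j + 1))⁻¹ * (r : ℂ) ^ (m + 1)‖ₑ =
        ENNReal.ofReal (r ^ ((m : ℝ) - j)) := by
      rw [← ofReal_norm, norm_mul, norm_inv, norm_pow, norm_pow, Complex.norm_real,
        Real.norm_of_nonneg hr.le]
      congr 1
      rw [show (m : ℝ) - j = -((j + 1 : ℕ) : ℝ) + ((m + 1 : ℕ) : ℝ) by push_cast; ring,
        Real.rpow_add hr, Real.rpow_neg hr.le, Real.rpow_natCast, Real.rpow_natCast]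
    have htw : tw (((m : ℝ) + 1) * iv p - (m : ℝ) + (j : ℝ)) i =
        ENNReal.ofReal (r ^ (((m : ℝ) + 1) * iv p - (m : ℝ) + (j : ℝ))) := by
      rw [tw, hrdef, ← Real.rpow_natCast, ← Real.rpow_mul two_pos.le, mul_comm]
    -- The smoothness `s = n/p - (n-1) + j` is exactly the one making `2^{is} ‖W i‖_p` independent
    -- of `i`.
    have hone : ENNReal.ofReal (r ^ (((m : ℝ) + 1) * iv p - (m : ℝ) + (j : ℝ))) *
        ENNReal.ofReal (r ^ ((m : ℝ) - j)) *
        ENNReal.ofReal (r ^ (-(((m + 1 : ℕ) : ℝ) * iv p))) = 1 := by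
      rw [← ENNReal.ofReal_mul (by positivity), ← ENNReal.ofReal_mul (by positivity),
        ← Real.rpow_add hr, ← Real.rpow_add hr, ← ENNReal.ofReal_one]
      congr 1
      refine (congrArg (fun e : ℝ => r ^ e) ?_).trans (Real.rpow_zero r)
      push_cast; ring
    rw [hce, hre, htw]
    calc (if i < k then (k : ℝ≥0∞)⁻¹ * eLpNorm (W 0) p volume else 0)
        = (if i < k then (k : ℝ≥0∞)⁻¹ else 0) * eLpNorm (W 0) p volume := by
          split_ifs <;> simp
      _ = (ENNReal.ofReal (r ^ (((m : ℝ) + 1) * iv p - (m : ℝ) + (j : ℝ))) *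
            ENNReal.ofReal (r ^ ((m : ℝ) - j)) *
            ENNReal.ofReal (r ^ (-(((m + 1 : ℕ) : ℝ) * iv p)))) *
          ((if i < k then (k : ℝ≥0∞)⁻¹ else 0) * eLpNorm (W 0) p volume) := by
          rw [hone, one_mul]
      _ = _ := by ring

end
end
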